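/- Let τ > 0 and let f ∈ C^∞([0,τ]) be pliable at 0, with f' > 0 and f'' > 0 on (0,τ]. Then there exist an integer n ≥ 2, sequences of positive reals (l_m)_{m≥1}, (r_m)_{m≥1}, angles (α_m)_{m≥1} ⊂ (0,π), and for each m ≥ 1 a compact interval J_m and a convex function F_m ∈ C^∞(J_m) whose graph Γ_m is a convex smoothing of an (l_m, r_m, α_m)-hinge, such that: (1) each Γ_m is modelled on f near its endpoints; (2) F_m'' > 0 on the interior of J_m and F_m'' = 0 at the endpoints of J_m (so Γ_m has positive curvature everywhere except at its endpoints); (3) for every integer r ≥ 0, sup_m ‖F_m‖_{C^r(J_m)} < ∞; (4) Σ_{m≥1} 2^m (l_m + r_m) < ∞ and Σ_{m≥1} 2^m (π − α_m) = π/n. -/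

import Mathlib

open Set Filter Topology

noncomputable section

/-- The `C^r` norm `‖f‖_{C^r(J)} = ∑_{i=0}^{r} max_J |f^{(i)}|` of a function on a set
`J ⊆ ℝ` (derivatives taken within `J`). -/
def CrNorm (r : ℕ) (f : ℝ → ℝ) (J : Set ℝ) : ℝ :=
  ∑ i ∈ Finset.range (r + 1), ⨆ x : J, |iteratedDerivWithin i f J (x : ℝ)|

/-- The support of `g` relative to the interval `[a,b]`: the closure of the set of points
of `[a,b]` where `g` is nonzero. -/
def suppOn (a b : ℝ) (g : ℝ → ℝ) : Set ℝ :=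
  closure {x | x ∈ Set.Icc a b ∧ g x ≠ 0}

/-- The data `(k₀, cs, g)` is a series witnessing that `f` is pliable at the endpoint `c`
of the interval `[a,b]`:
* `f = Σ_{k ≥ k₀} cs k • g k` pointwise on `[a,b]`;
* the `cs k` are positive and super-exponentially converge to `0`;
* the `g k` are `C^∞` on `[a,b]`, their supports form a locally finite family of compact
  subsets of `[a,b] ∖ {c}`, and for every `r` the `C^r` norms of `g k` grow at most
  exponentially in `k`;
* there is `L > 0` such that whenever `0 < 2ε < b - a`, the set `J_ε` of indices `k ≥ k₀`
  whose support meets `{x ∈ [a,b] : ε ≤ |x - c| ≤ 2ε}` has at most `L` elements, and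
  `2^{-kL} ≤ ε` for every `k ∈ J_ε`. -/
structure IsPliableSeries (a b c : ℝ) (f : ℝ → ℝ) (k₀ : ℤ) (cs : ℤ → ℝ)
    (g : ℤ → ℝ → ℝ) : Prop where
  sum_eq : ∀ x ∈ Set.Icc a b,
    HasSum (fun k : {k : ℤ // k₀ ≤ k} => cs k.val * g k.val x) (f x)
  cs_pos : ∀ k : ℤ, k₀ ≤ k → 0 < cs k
  cs_superexp : ∀ γ : ℝ,
    Tendsto (fun k : ℤ => (2 : ℝ) ^ (γ * (k : ℝ)) * cs k) atTop (𝓝 0)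
  g_smooth : ∀ k : ℤ, k₀ ≤ k → ContDiffOn ℝ (⊤ : ℕ∞) (g k) (Set.Icc a b)
  supp_compact : ∀ k : ℤ, k₀ ≤ k → IsCompact (suppOn a b (g k))
  supp_subset : ∀ k : ℤ, k₀ ≤ k → suppOn a b (g k) ⊆ Set.Icc a b \ {c}
  supp_locFin : ∀ x ∈ Set.Icc a b \ {c}, ∃ U ∈ 𝓝 x,
    {k : ℤ | k₀ ≤ k ∧ (suppOn a b (g k) ∩ U).Nonempty}.Finite
  norm_growth : ∀ r : ℕ, ∃ γ M : ℝ, ∀ k : ℤ, k₀ ≤ k →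
    (2 : ℝ) ^ (γ * (k : ℝ)) * CrNorm r (g k) (Set.Icc a b) ≤ M
  index_bound : ∃ L : ℕ, 0 < L ∧ ∀ ε : ℝ, 0 < ε → 2 * ε < b - a →
    {k : ℤ | k₀ ≤ k ∧ (suppOn a b (g k) ∩
      {x ∈ Set.Icc a b | ε ≤ |x - c| ∧ |x - c| ≤ 2 * ε}).Nonempty}.Finite ∧
    {k : ℤ | k₀ ≤ k ∧ (suppOn a b (g k) ∩
      {x ∈ Set.Icc a b | ε ≤ |x - c| ∧ |x - c| ≤ 2 * ε}).Nonempty}.ncard ≤ L ∧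
    ∀ k : ℤ, k₀ ≤ k →
      (suppOn a b (g k) ∩ {x ∈ Set.Icc a b | ε ≤ |x - c| ∧ |x - c| ≤ 2 * ε}).Nonempty →
      (2 : ℝ) ^ (-(k : ℝ) * (L : ℝ)) ≤ ε

/-- `f` is pliable at the endpoint `c` of `[a,b]`. -/
def Pliable (a b c : ℝ) (f : ℝ → ℝ) : Prop :=
  ∃ (k₀ : ℤ) (cs : ℤ → ℝ) (g : ℤ → ℝ → ℝ), IsPliableSeries a b c f k₀ cs g

/-- The point `(x, y)` of the Euclidean plane. -/
def pt2 (x y : ℝ) : EuclideanSpace ℝ (Fin 2) :=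
  (WithLp.equiv 2 (Fin 2 → ℝ)).symm ![x, y]

/-!
A pliable function is infinitely flat at `0`. A convex arc is determined by its second derivative
`P` on a short interval `[0, h]`. Near `0` take `P = f''`, near `h` take the second derivative of a
reflected copy of the graph of `f` whose tangent at the endpoint has slope `tan θ`, and add a bump
in the middle so that `∫ P = tan θ`. By flatness the two end pieces are `O(h ^ K)` for every `K`,
together with their derivatives. Hence for `θ ~ h ^ (N + 2)` the bump has a positive coefficient and
`P` is bounded by `1` in `C ^ N`. The end tangents of the arc form a hinge of angle `π - θ` and
total length at most `3 * h`. Letting `N` grow with the index `m` and `h` decay like `4 ^ (-m)`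
gives summable lengths and uniformly bounded norms, and since each `θ` may be chosen freely within a
factor of `2`, the weighted sum of the angles can be made exactly `π / n`.
-/

open scoped ContDiff Real

section Flatness

lemma iteratedDerivWithin_eq_zero_of_forall_isLittleO {f : ℝ → ℝ} {s : Set ℝ} {x₀ : ℝ}
    (hs : Convex ℝ s) (hx₀ : x₀ ∈ s) (hacc : AccPt x₀ (𝓟 s)) (hf : ContDiffOn ℝ ∞ f s)
    (hsmall : ∀ n : ℕ, f =o[𝓝[s] x₀] fun x => (x - x₀) ^ n) (n : ℕ) :
    iteratedDerivWithin n f s x₀ = 0 := by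
  induction n using Nat.strong_induction_on with
  | _ n ih =>
  set d : ℝ := (n.factorial : ℝ)⁻¹ * iteratedDerivWithin n f s x₀ with hd
  have taylor_eq : ∀ x, taylorWithinEval f n s x₀ x = d * (x - x₀) ^ n := fun x => by
    rw [taylor_within_apply, Finset.sum_range_succ, Finset.sum_eq_zero, zero_add, hd, smul_eq_mul]
    · ring
    · intro k hk
      rw [ih k (Finset.mem_range.1 hk), smul_zero]
  have leading_isLittleO : (fun x => d * (x - x₀) ^ n) =o[𝓝[s] x₀] fun x => (x - x₀) ^ n := by
    have hrem := taylor_isLittleO hs hx₀ (hf.of_le (mod_cast le_top) : ContDiffOn ℝ n f s)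
    simpa [taylor_eq] using (hsmall n).sub hrem
  have pow_ne_zero_frequently : ∃ᶠ x in 𝓝[s] x₀, (x - x₀) ^ n ≠ 0 :=
    frequently_nhdsWithin_iff.2 <| (accPt_iff_frequently.1 hacc).mono fun x hx =>
      ⟨pow_ne_zero n (sub_ne_zero.2 hx.1), hx.2⟩
  have hd0 : d = 0 := by
    by_contra hd0
    exact Asymptotics.isLittleO_irrefl pow_ne_zero_frequently
      ((Asymptotics.isLittleO_const_mul_left_iff hd0).1 leading_isLittleO)
  simpa [hd, n.factorial_ne_zero] using hd0

lemma abs_le_CrNorm_zero {g : ℝ → ℝ} {J : Set ℝ} (hJ : IsCompact J) (hg : ContinuousOn g J)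
    {x : ℝ} (hx : x ∈ J) : |g x| ≤ CrNorm 0 g J := by
  have hbdd : BddAbove (range fun y : J => |g y|) := by
    simpa only [image_eq_range] using hJ.bddAbove_image hg.abs
  simpa [CrNorm] using le_ciSup hbdd ⟨x, hx⟩

lemma abs_le_ncard_mul_of_hasSum {ι : Type*} {u : ι → ℝ} {y B : ℝ} (hu : HasSum u y) {S : Set ι}
    (hS : S.Finite) (hzero : ∀ i ∉ S, u i = 0) (hle : ∀ i ∈ S, |u i| ≤ B) :
    |y| ≤ S.ncard * B := by
  have hsum : HasSum u (∑ i ∈ hS.toFinset, u i) :=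
    hasSum_sum_of_ne_finset_zero (L := SummationFilter.unconditional _)
      fun i hi => hzero i (mt hS.mem_toFinset.2 hi)
  rw [hu.unique hsum, ncard_eq_toFinset_card S hS, ← nsmul_eq_mul]
  exact (Finset.abs_sum_le_sum_abs _ _).trans
    (Finset.sum_le_card_nsmul _ _ B fun i hi => hle i (hS.mem_toFinset.1 hi))

lemma mem_suppOn {a b x : ℝ} {g : ℝ → ℝ} (hx : x ∈ Icc a b) (hgx : g x ≠ 0) : x ∈ suppOn a b g :=
  subset_closure ⟨hx, hgx⟩

/-- The index set `J_ε` of a pliable series: those `k ≥ k₀` for which the support of `g k` meets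
the annulus `ε ≤ |x - c| ≤ 2ε` in `[a, b]`. -/
def annulusIndices (a b c : ℝ) (k₀ : ℤ) (g : ℤ → ℝ → ℝ) (ε : ℝ) : Set ℤ :=
  {k | k₀ ≤ k ∧ (suppOn a b (g k) ∩
    {x ∈ Icc a b | ε ≤ |x - c| ∧ |x - c| ≤ 2 * ε}).Nonempty}

namespace IsPliableSeries

variable {a b c : ℝ} {f : ℝ → ℝ} {k₀ : ℤ} {cs : ℤ → ℝ} {g : ℤ → ℝ → ℝ}

lemma exists_rpow_mul_cs_le (S : IsPliableSeries a b c f k₀ cs g) (γ : ℝ) :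
    ∃ C, ∀ k, k₀ ≤ k → (2 : ℝ) ^ (γ * (k : ℝ)) * cs k ≤ C := by
  have hshift : Tendsto (fun j : ℕ => k₀ + (j : ℤ)) atTop atTop :=
    tendsto_atTop_add_const_left _ _ tendsto_natCast_atTop_atTop
  obtain ⟨C, hC⟩ := ((S.cs_superexp γ).comp hshift).bddAbove_range
  refine ⟨C, fun k hk => ?_⟩
  obtain ⟨j, rfl⟩ := Int.le.dest hk
  exact hC ⟨j, rfl⟩

lemma exists_abs_term_le (S : IsPliableSeries a b c f k₀ cs g) (L n : ℕ) :
    ∃ C, 0 ≤ C ∧ ∀ k, k₀ ≤ k → ∀ x ∈ Icc a b,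
      |cs k * g k x| ≤ C * ((2 : ℝ) ^ (-(k : ℝ) * (L : ℝ))) ^ n := by
  obtain ⟨γ, M, hM⟩ := S.norm_growth 0
  obtain ⟨C, hC⟩ := S.exists_rpow_mul_cs_le (L * n - γ)
  refine ⟨|C| * |M|, by positivity, fun k hk x hx => ?_⟩
  have hg : 2 ^ (γ * (k : ℝ)) * |g k x| ≤ |M| :=
    (mul_le_mul_of_nonneg_left
      (abs_le_CrNorm_zero isCompact_Icc (S.g_smooth k hk).continuousOn hx) (by positivity)).trans
      ((hM k hk).trans (le_abs_self M))
  have hcs := (hC k hk).trans (le_abs_self C)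
  have hexp : (2 : ℝ) ^ ((L * n - γ) * (k : ℝ)) * 2 ^ (γ * (k : ℝ)) *
      (2 ^ (-(k : ℝ) * (L : ℝ))) ^ n = 1 := by
    rw [← Real.rpow_natCast, ← Real.rpow_mul two_pos.le, ← Real.rpow_add two_pos,
      ← Real.rpow_add two_pos]
    ring_nf
    exact Real.rpow_zero 2
  have hcs_pos := S.cs_pos k hk
  calc |cs k * g k x| = (2 ^ ((L * n - γ) * (k : ℝ)) * cs k) * (2 ^ (γ * (k : ℝ)) * |g k x|) *
        (2 ^ (-(k : ℝ) * (L : ℝ))) ^ n := by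
        rw [abs_mul, abs_of_pos hcs_pos]
        linear_combination (-(cs k * |g k x|)) * hexp
    _ ≤ |C| * |M| * (2 ^ (-(k : ℝ) * (L : ℝ))) ^ n := by gcongr

lemma apply_eq_zero (S : IsPliableSeries a b c f k₀ cs g) (hc : c ∈ Icc a b) : f c = 0 := by
  refine (S.sum_eq c hc).unique ((hasSum_zero).congr_fun fun k => ?_)
  by_contra hne
  exact (S.supp_subset k k.2 (mem_suppOn hc (right_ne_zero_of_mul hne))).2 rfl

lemma exists_abs_le_mul_pow (S : IsPliableSeries a b c f k₀ cs g) (n : ℕ) :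
    ∃ C, ∀ x ∈ Icc a b, x ≠ c → 2 * |x - c| < b - a → |f x| ≤ C * |x - c| ^ n := by
  obtain ⟨L, -, hL⟩ := S.index_bound
  obtain ⟨C, hC0, hC⟩ := S.exists_abs_term_le L n
  refine ⟨L * C, fun x hx hxc hxb => ?_⟩
  have hε : 0 < |x - c| := abs_pos.2 (sub_ne_zero.2 hxc)
  obtain ⟨hfin, hcard, hindex⟩ := hL |x - c| hε hxb
  set J : Set ℤ := annulusIndices a b c k₀ g |x - c|
  have hfin_sub : (Subtype.val ⁻¹' J : Set {k : ℤ // k₀ ≤ k}).Finite :=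
    Finite.preimage Subtype.val_injective.injOn hfin
  have hcard_sub : (Subtype.val ⁻¹' J : Set {k : ℤ // k₀ ≤ k}).ncard ≤ L :=
    (ncard_le_ncard_of_injOn Subtype.val (fun _ hk => hk) Subtype.val_injective.injOn hfin).trans
      hcard
  have hsum := abs_le_ncard_mul_of_hasSum (S.sum_eq x hx) hfin_sub (B := C * |x - c| ^ n)
    (fun k hk => ?_) (fun k hk => ?_)
  · calc |f x| ≤ _ := hsum
      _ ≤ L * (C * |x - c| ^ n) := by gcongr
      _ = L * C * |x - c| ^ n := by ring
  · by_contra hne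
    exact hk ⟨k.2, x, mem_suppOn hx (right_ne_zero_of_mul hne), hx, le_rfl, by linarith⟩
  · refine (hC k k.2 x hx).trans ?_
    have := hindex k k.2 hk.2
    gcongr

lemma isLittleO_pow (S : IsPliableSeries a b c f k₀ cs g) (hab : a < b) (hc : c ∈ Icc a b)
    (n : ℕ) : f =o[𝓝[Icc a b] c] fun x => (x - c) ^ n := by
  obtain ⟨C, hC⟩ := S.exists_abs_le_mul_pow (n + 1)
  have hbig : f =O[𝓝[Icc a b] c] fun x => (x - c) ^ (n + 1) := by
    refine Asymptotics.IsBigO.of_bound C ?_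
    have hnear : ∀ᶠ x in 𝓝[Icc a b] c, |x - c| < (b - a) / 2 :=
      (eventually_abs_sub_lt c (half_pos (sub_pos.2 hab))).filter_mono nhdsWithin_le_nhds
    filter_upwards [hnear, self_mem_nhdsWithin] with x hxc hx
    rcases eq_or_ne x c with rfl | hne
    · simp [S.apply_eq_zero hc]
    · simpa [abs_pow] using hC x hx hne (by linarith)
  refine hbig.trans_isLittleO ?_
  have hsmall : (fun x => x - c) =o[𝓝[Icc a b] c] fun _ => (1 : ℝ) :=
    (Asymptotics.isLittleO_one_iff ℝ).2 <|
      ((continuous_sub_right c).tendsto' c 0 (sub_self c)).mono_left nhdsWithin_le_nhds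
  simpa [pow_succ] using (Asymptotics.isBigO_refl (fun x => (x - c) ^ n) _).mul_isLittleO hsmall

end IsPliableSeries

lemma Pliable.iteratedDerivWithin_eq_zero {a b c : ℝ} {f : ℝ → ℝ} (hpl : Pliable a b c f)
    (hab : a < b) (hc : c ∈ Icc a b) (hf : ContDiffOn ℝ ∞ f (Icc a b)) (n : ℕ) :
    iteratedDerivWithin n f (Icc a b) c = 0 := by
  obtain ⟨k₀, cs, g, S⟩ := hpl
  exact iteratedDerivWithin_eq_zero_of_forall_isLittleO (convex_Icc a b) hc
    (uniqueDiffOn_Icc hab c hc).accPt hf (S.isLittleO_pow hab hc) n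

end Flatness

section SmoothTools

lemma eqOn_iteratedDeriv_closure {f g : ℝ → ℝ} (hf : ContDiff ℝ ∞ f) (hg : ContDiff ℝ ∞ g)
    {U : Set ℝ} (hU : IsOpen U) (h : EqOn f g U) (n : ℕ) :
    EqOn (iteratedDeriv n f) (iteratedDeriv n g) (closure U) :=
  (h.iteratedDeriv_of_isOpen hU n).closure (hf.continuous_iteratedDeriv n (mod_cast le_top))
    (hg.continuous_iteratedDeriv n (mod_cast le_top))

lemma iteratedDeriv_eq_zero_of_eqOn_Iio {g : ℝ → ℝ} (hg : ContDiff ℝ ∞ g) {a : ℝ}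
    (h : EqOn g 0 (Iio a)) (n : ℕ) {x : ℝ} (hx : x ≤ a) : iteratedDeriv n g x = 0 := by
  have heq := eqOn_iteratedDeriv_closure hg (contDiff_const (c := 0)) isOpen_Iio h n
    (by rwa [closure_Iio] : x ∈ closure (Iio a))
  rwa [iteratedDeriv_fun_const_zero] at heq

lemma iteratedDeriv_eq_zero_of_eqOn_Ioi {g : ℝ → ℝ} (hg : ContDiff ℝ ∞ g) {a : ℝ}
    (h : EqOn g 0 (Ioi a)) (n : ℕ) {x : ℝ} (hx : a ≤ x) : iteratedDeriv n g x = 0 := by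
  have heq := eqOn_iteratedDeriv_closure hg (contDiff_const (c := 0)) isOpen_Ioi h n
    (by rwa [closure_Ioi] : x ∈ closure (Ioi a))
  rwa [iteratedDeriv_fun_const_zero] at heq

lemma hasDerivAt_indicator_Ioi {u : ℝ → ℝ} {a b : ℝ} (hab : a < b)
    (hu : DifferentiableOn ℝ u (Icc a b)) (hua : u a = 0)
    (hua' : derivWithin u (Icc a b) a = 0) {x : ℝ} (hx : x < b) :
    HasDerivAt ((Ioi a).indicator u) ((Ioi a).indicator (derivWithin u (Icc a b)) x) x := by
  rcases lt_trichotomy x a with hxa | rfl | hax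
  · rw [indicator_of_notMem (notMem_Ioi.2 hxa.le)]
    refine (hasDerivAt_const x (0 : ℝ)).congr_of_eventuallyEq ?_
    filter_upwards [Iio_mem_nhds hxa] with y hy
    exact indicator_of_notMem (notMem_Ioi.2 (le_of_lt hy)) u
  · rw [indicator_of_notMem self_notMem_Ioi]
    have right : HasDerivWithinAt ((Ioi x).indicator u) 0 (Ici x) x := by
      have hux := (hu x (left_mem_Icc.2 hab.le)).hasDerivWithinAt
      rw [hua'] at hux
      refine (hux.mono_of_mem_nhdsWithin (Icc_mem_nhdsGE hab)).congr (fun y hy => ?_)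
        (by simp [hua])
      rcases (mem_Ici.1 hy).eq_or_lt with rfl | hxy
      · simp [hua]
      · exact indicator_of_mem hxy u
    have left : HasDerivWithinAt ((Ioi x).indicator u) 0 (Iic x) x :=
      (hasDerivWithinAt_const x (Iic x) (0 : ℝ)).congr
        (fun y hy => indicator_of_notMem (notMem_Ioi.2 hy) u) (by simp)
    simpa only [Iic_union_Ici, hasDerivWithinAt_univ] using left.union right
  · rw [indicator_of_mem (mem_Ioi.2 hax)]
    refine ((hu x ⟨hax.le, hx.le⟩).hasDerivWithinAt.hasDerivAt
      (Icc_mem_nhds hax hx)).congr_of_eventuallyEq ?_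
    filter_upwards [Ioi_mem_nhds hax] with y hy
    exact indicator_of_mem hy u

lemma contDiffOn_indicator_Ioi {u : ℝ → ℝ} {a b : ℝ} (hab : a < b)
    (hu : ContDiffOn ℝ ∞ u (Icc a b)) (hflat : ∀ i, iteratedDerivWithin i u (Icc a b) a = 0) :
    ContDiffOn ℝ ∞ ((Ioi a).indicator u) (Iio b) := by
  refine contDiffOn_infty.2 fun n => ?_
  induction n generalizing u with
  | zero =>
    exact contDiffOn_zero.2 fun x hx => (hasDerivAt_indicator_Ioi hab
      (hu.differentiableOn (by simp)) (by simpa using hflat 0) (by simpa using hflat 1)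
      hx).continuousAt.continuousWithinAt
  | succ n ih =>
    have hderiv := fun x (hx : x ∈ Iio b) => hasDerivAt_indicator_Ioi hab
      (hu.differentiableOn (by simp)) (by simpa using hflat 0) (by simpa using hflat 1) hx
    rw [Nat.cast_succ, contDiffOn_succ_iff_deriv_of_isOpen isOpen_Iio]
    refine ⟨fun x hx => (hderiv x hx).differentiableAt.differentiableWithinAt, by simp, ?_⟩
    refine (ih (hu.derivWithin (uniqueDiffOn_Icc hab) (by simp)) fun i => ?_).congr
      fun x hx => (hderiv x hx).deriv
    rw [← iteratedDerivWithin_succ', hflat]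

/-- A smooth decreasing step: `1` for `t ≤ 1/2`, positive for `t < 3/4`, and `0` for `3/4 ≤ t`. -/
def cutoff (t : ℝ) : ℝ := Real.smoothTransition (3 - 4 * t)

lemma contDiff_cutoff : ContDiff ℝ ∞ cutoff :=
  Real.smoothTransition.contDiff.comp (by fun_prop : ContDiff ℝ ∞ fun t : ℝ => 3 - 4 * t)

lemma cutoff_nonneg (t : ℝ) : 0 ≤ cutoff t := Real.smoothTransition.nonneg _

lemma cutoff_le_one (t : ℝ) : cutoff t ≤ 1 := Real.smoothTransition.le_one _

lemma cutoff_pos {t : ℝ} (ht : t < 3 / 4) : 0 < cutoff t :=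
  Real.smoothTransition.pos_of_pos (by linarith)

lemma cutoff_eq_one {t : ℝ} (ht : t ≤ 1 / 2) : cutoff t = 1 :=
  Real.smoothTransition.one_of_one_le (by linarith)

lemma cutoff_eq_zero {t : ℝ} (ht : 3 / 4 ≤ t) : cutoff t = 0 :=
  Real.smoothTransition.zero_of_nonpos (by linarith)

lemma exists_contDiff_extension_of_flat {u : ℝ → ℝ} {a b : ℝ} (hab : a < b)
    (hu : ContDiffOn ℝ ∞ u (Icc a b)) (hflat : ∀ i, iteratedDerivWithin i u (Icc a b) a = 0)
    (hnonneg : ∀ x ∈ Icc a b, 0 ≤ u x) :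
    ∃ φ : ℝ → ℝ, ContDiff ℝ ∞ φ ∧ (∀ x, 0 ≤ φ x) ∧ EqOn φ 0 (Iic a) ∧
      EqOn φ u (Icc a ((a + b) / 2)) := by
  have hba : 0 < b - a := sub_pos.2 hab
  have cutoff_zero : ∀ x, a + 3 / 4 * (b - a) ≤ x → cutoff ((x - a) / (b - a)) = 0 := fun x hx =>
    cutoff_eq_zero ((le_div_iff₀ hba).2 (by linarith))
  refine ⟨fun x => (Ioi a).indicator u x * cutoff ((x - a) / (b - a)), ?_, fun x => ?_,
    fun x hx => ?_, fun x hx => ?_⟩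
  · refine contDiff_iff_contDiffAt.2 fun x => ?_
    rcases lt_or_ge x b with hx | hx
    · exact ((contDiffOn_indicator_Ioi hab hu hflat).contDiffAt (Iio_mem_nhds hx)).mul
        (contDiff_cutoff.comp (by fun_prop)).contDiffAt
    · refine (contDiffAt_const (c := 0)).congr_of_eventuallyEq ?_
      filter_upwards [Ioi_mem_nhds (by linarith : a + 3 / 4 * (b - a) < x)] with y hy
      rw [cutoff_zero y (le_of_lt hy), mul_zero]
  · rcases le_or_gt x b with hx | hx
    · exact mul_nonneg (indicator_apply_nonneg fun hax => hnonneg x ⟨le_of_lt hax, hx⟩)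
        (cutoff_nonneg _)
    · simp [cutoff_zero x (by linarith)]
  · simp [indicator_of_notMem (notMem_Ioi.2 (mem_Iic.1 hx))]
  · have hcut : cutoff ((x - a) / (b - a)) = 1 :=
      cutoff_eq_one ((div_le_iff₀ hba).2 (by linarith [hx.2]))
    rcases hx.1.eq_or_lt with rfl | hax
    · simpa using (hflat 0).symm
    · simp [hcut, hax]

/-- The antiderivative of `g` vanishing at `0`. -/
def primitive (g : ℝ → ℝ) (x : ℝ) : ℝ := ∫ y in (0 : ℝ)..x, g y

@[simp] lemma primitive_zero (g : ℝ → ℝ) : primitive g 0 = 0 := intervalIntegral.integral_same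

lemma hasDerivAt_primitive {g : ℝ → ℝ} (hg : Continuous g) (x : ℝ) :
    HasDerivAt (primitive g) (g x) x :=
  (hg.integral_hasStrictDerivAt 0 x).hasDerivAt

lemma deriv_primitive {g : ℝ → ℝ} (hg : Continuous g) : deriv (primitive g) = g :=
  funext fun x => (hasDerivAt_primitive hg x).deriv

lemma contDiff_primitive {g : ℝ → ℝ} (hg : ContDiff ℝ ∞ g) : ContDiff ℝ ∞ (primitive g) := by
  refine contDiff_infty_iff_deriv.2
    ⟨fun x => (hasDerivAt_primitive hg.continuous x).differentiableAt, ?_⟩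
  rwa [deriv_primitive hg.continuous]

lemma eqOn_primitive {g₁ g₂ : ℝ → ℝ} {s : Set ℝ} [hs : s.OrdConnected] (h0 : (0 : ℝ) ∈ s)
    (h : EqOn g₁ g₂ s) : EqOn (primitive g₁) (primitive g₂) s := fun _ hx =>
  intervalIntegral.integral_congr (h.mono (hs.uIcc_subset h0 hx))

lemma primitive_nonneg {g : ℝ → ℝ} (hg : ∀ x, 0 ≤ g x) {x : ℝ} (hx : 0 ≤ x) :
    0 ≤ primitive g x :=
  intervalIntegral.integral_nonneg hx fun y _ => hg y

lemma eqOn_Icc_of_hasDerivWithinAt {u v w : ℝ → ℝ} {a b : ℝ}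
    (hu : ∀ x ∈ Icc a b, HasDerivWithinAt u (w x) (Icc a b) x)
    (hv : ∀ x ∈ Icc a b, HasDerivWithinAt v (w x) (Icc a b) x) (ha : u a = v a) :
    EqOn u v (Icc a b) :=
  eq_of_has_deriv_right_eq
    (fun x hx => (hu x (Ico_subset_Icc_self hx)).mono_of_mem_nhdsWithin (Icc_mem_nhdsGE_of_mem hx))
    (fun x hx => (hv x (Ico_subset_Icc_self hx)).mono_of_mem_nhdsWithin (Icc_mem_nhdsGE_of_mem hx))
    (fun x hx => (hu x hx).continuousWithinAt) (fun x hx => (hv x hx).continuousWithinAt) ha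

lemma eqOn_Icc_of_hasDerivWithinAt_two {u v u' v' w : ℝ → ℝ} {a b : ℝ}
    (hu : ∀ x ∈ Icc a b, HasDerivWithinAt u (u' x) (Icc a b) x)
    (hv : ∀ x ∈ Icc a b, HasDerivWithinAt v (v' x) (Icc a b) x)
    (hu' : ∀ x ∈ Icc a b, HasDerivWithinAt u' (w x) (Icc a b) x)
    (hv' : ∀ x ∈ Icc a b, HasDerivWithinAt v' (w x) (Icc a b) x) (ha : u a = v a)
    (ha' : u' a = v' a) : EqOn u v (Icc a b) :=
  have heq' : EqOn u' v' (Icc a b) := eqOn_Icc_of_hasDerivWithinAt hu' hv' ha'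
  eqOn_Icc_of_hasDerivWithinAt hu (fun x hx => heq' hx ▸ hv x hx) ha

lemma abs_iteratedDeriv_le_mul_pow_of_flat {g : ℝ → ℝ} (hg : ContDiff ℝ ∞ g)
    (hflat : ∀ i, iteratedDeriv i g 0 = 0) {C R : ℝ} {j K : ℕ}
    (hC : ∀ x ∈ Icc 0 R, |iteratedDeriv (j + K) g x| ≤ C) {x : ℝ} (hx : x ∈ Icc 0 R) :
    |iteratedDeriv j g x| ≤ C * x ^ K := by
  have hC0 : 0 ≤ C := (abs_nonneg _).trans (hC x hx)
  induction K generalizing j x with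
  | zero => simpa using hC x hx
  | succ K ih =>
    have hsub : Icc 0 x ⊆ Icc 0 R := Icc_subset_Icc_right hx.2
    have hderiv_le : ∀ y ∈ Icc 0 x, ‖deriv (iteratedDeriv j g) y‖ ≤ C * x ^ K := fun y hy => by
      rw [← iteratedDeriv_succ]
      refine (ih (j := j + 1) (fun z hz => ?_) (hsub hy)).trans ?_
      · simpa only [add_assoc, add_comm 1 K] using hC z hz
      · gcongr
        exacts [hy.1, hy.2]
    have hmvt := Convex.norm_image_sub_le_of_norm_deriv_le
      (fun y _ => hg.differentiable_iteratedDeriv j (mod_cast ENat.natCast_lt_top j) y)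
      hderiv_le (convex_Icc 0 x) (left_mem_Icc.2 hx.1) (right_mem_Icc.2 hx.1)
    simpa [hflat j, abs_of_nonneg hx.1, pow_succ, mul_assoc] using hmvt

end SmoothTools

section RotatedGraph

lemma hasDerivAt_invFun_of_pos {σ σ' : ℝ → ℝ} (hσ : ∀ y, HasDerivAt σ (σ' y) y)
    (hpos : ∀ y, 0 < σ' y) (hsurj : Function.Surjective σ) (s : ℝ) :
    HasDerivAt (Function.invFun σ) (σ' (Function.invFun σ s))⁻¹ s := by
  have hmono : StrictMono σ := strictMono_of_deriv_pos fun y => (hσ y).deriv ▸ hpos y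
  have hright : Function.RightInverse (Function.invFun σ) σ := Function.rightInverse_invFun hsurj
  have hleft : Function.LeftInverse (Function.invFun σ) σ :=
    Function.leftInverse_invFun hmono.injective
  have hinv_mono : Monotone (Function.invFun σ) := fun s t hst =>
    hmono.le_iff_le.1 (by rwa [hright, hright])
  exact (hσ _).of_local_left_inverse
    (hinv_mono.continuous_of_surjective hleft.surjective).continuousAt (hpos _).ne'
    (.of_forall hright)

lemma exists_iteratedDeriv_comp_eq {E : Type*} [NormedAddCommGroup E] [NormedSpace ℝ E]
    {U : Set (E × ℝ)} (hU : IsOpen U) {w ψ : E × ℝ → ℝ} (hw : ContDiffOn ℝ ∞ w U)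
    (hψ : ContDiffOn ℝ ∞ ψ U) (j : ℕ) :
    ∃ D : E × ℝ → ℝ, ContDiffOn ℝ ∞ D U ∧ ∀ (θ : E) (y : ℝ → ℝ), (∀ s, (θ, y s) ∈ U) →
      (∀ s, HasDerivAt y (w (θ, y s)) s) →
      iteratedDeriv j (fun s => ψ (θ, y s)) = fun s => D (θ, y s) := by
  induction j with
  | zero => exact ⟨ψ, hψ, fun θ y _ _ => iteratedDeriv_zero⟩
  | succ j ih =>
    obtain ⟨D, hD, hDeq⟩ := ih
    refine ⟨fun p => fderiv ℝ D p (0, w p), ?_, fun θ y hyU hy => ?_⟩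
    · exact (hD.fderiv_of_isOpen hU (by simp)).clm_apply (contDiffOn_const.prodMk hw)
    · rw [iteratedDeriv_succ, hDeq θ y hyU hy]
      funext s
      have hDs : HasFDerivAt D (fderiv ℝ D (θ, y s)) (θ, y s) :=
        ((hD.contDiffAt (hU.mem_nhds (hyU s))).differentiableAt (by simp)).hasFDerivAt
      exact (hDs.comp_hasDerivAt s ((hasDerivAt_const s θ).prodMk (hy s))).deriv

lemma contDiff_comp_of_hasDerivAt {E : Type*} [NormedAddCommGroup E] [NormedSpace ℝ E]
    {U : Set (E × ℝ)} (hU : IsOpen U) {w ψ : E × ℝ → ℝ} (hw : ContDiffOn ℝ ∞ w U)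
    (hψ : ContDiffOn ℝ ∞ ψ U) {θ : E} {y : ℝ → ℝ} (hyU : ∀ s, (θ, y s) ∈ U)
    (hy : ∀ s, HasDerivAt y (w (θ, y s)) s) : ContDiff ℝ ∞ fun s => ψ (θ, y s) := by
  refine contDiff_of_differentiable_iteratedDeriv fun j _ => ?_
  obtain ⟨D, hD, hDeq⟩ := exists_iteratedDeriv_comp_eq hU hw hψ j
  rw [hDeq θ y hyU hy]
  exact fun s => DifferentiableAt.comp s
    ((hD.contDiffAt (hU.mem_nhds (hyU s))).differentiableAt (by simp))
    ((differentiableAt_const θ).prodMk (hy s).differentiableAt)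

lemma Icc_pi_div_three_subset : Icc 0 (π / 3) ⊆ Ico 0 (π / 2) := fun _ hθ =>
  ⟨hθ.1, by linarith [hθ.2, Real.pi_pos]⟩

lemma one_half_le_cos {θ : ℝ} (hθ : θ ∈ Icc 0 (π / 3)) : 1 / 2 ≤ Real.cos θ :=
  Real.cos_pi_div_three ▸ Real.cos_le_cos_of_nonneg_of_le_pi hθ.1 (by linarith [Real.pi_pos]) hθ.2

/-- A smooth nonnegative function vanishing on `(-∞, 0]`. Such a `φ` is the second derivative of the
convex function `primitive (primitive φ)`, which is infinitely flat at `0`. -/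
structure IsFlatProfile (φ : ℝ → ℝ) : Prop where
  contDiff : ContDiff ℝ ∞ φ
  nonneg : ∀ x, 0 ≤ φ x
  eqOn_zero : EqOn φ 0 (Iic 0)

/-- The abscissa, in the frame rotated by `θ`, of the point of the graph of
`primitive (primitive φ)` over `y`. -/
def rotatedAbscissa (φ : ℝ → ℝ) (θ y : ℝ) : ℝ :=
  Real.cos θ * y + Real.sin θ * primitive (primitive φ) y

/-- The derivative of `rotatedAbscissa φ θ`. -/
def rotatedSpeed (φ : ℝ → ℝ) (θ y : ℝ) : ℝ := Real.cos θ + Real.sin θ * primitive φ y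

/-- The inverse of `rotatedAbscissa φ θ`; meaningful for `θ ∈ [0, π/2)`. -/
def rotatedParam (φ : ℝ → ℝ) (θ : ℝ) : ℝ → ℝ := Function.invFun (rotatedAbscissa φ θ)

/-- The graph of `primitive (primitive φ)`, rotated by `θ`, as a function of the new abscissa. -/
def rotatedGraph (φ : ℝ → ℝ) (θ s : ℝ) : ℝ :=
  Real.cos θ * primitive (primitive φ) (rotatedParam φ θ s) - Real.sin θ * rotatedParam φ θ s

/-- The second derivative of `rotatedGraph φ θ`. -/
def rotatedProfile (φ : ℝ → ℝ) (θ s : ℝ) : ℝ :=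
  φ (rotatedParam φ θ s) / rotatedSpeed φ θ (rotatedParam φ θ s) ^ 3

namespace IsFlatProfile

variable {φ : ℝ → ℝ} {θ : ℝ}

protected lemma primitive (hφ : IsFlatProfile φ) : IsFlatProfile (primitive φ) := by
  have hzero : EqOn (primitive φ) 0 (Iic 0) :=
    (eqOn_primitive self_mem_Iic hφ.eqOn_zero).trans fun x _ => by simp [primitive]
  refine ⟨contDiff_primitive hφ.contDiff, fun x => ?_, hzero⟩
  rcases le_total x 0 with hx | hx
  · exact (hzero hx).ge
  · exact primitive_nonneg hφ.nonneg hx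

lemma iteratedDeriv_apply_zero (hφ : IsFlatProfile φ) (i : ℕ) : iteratedDeriv i φ 0 = 0 :=
  iteratedDeriv_eq_zero_of_eqOn_Iio hφ.contDiff (hφ.eqOn_zero.mono Iio_subset_Iic_self) i le_rfl

lemma rotatedSpeed_pos (hφ : IsFlatProfile φ) (hθ : θ ∈ Ico 0 (π / 2)) (y : ℝ) :
    0 < rotatedSpeed φ θ y :=
  add_pos_of_pos_of_nonneg (Real.cos_pos_of_mem_Ioo ⟨by linarith [hθ.1, hθ.2], hθ.2⟩)
    (mul_nonneg (Real.sin_nonneg_of_mem_Icc ⟨hθ.1, by linarith [hθ.1, hθ.2]⟩)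
      (hφ.primitive.nonneg y))

lemma hasDerivAt_rotatedAbscissa (hφ : IsFlatProfile φ) (θ y : ℝ) :
    HasDerivAt (rotatedAbscissa φ θ) (rotatedSpeed φ θ y) y :=
  (hasDerivAt_const_mul (Real.cos θ)).add
    ((hasDerivAt_primitive hφ.primitive.contDiff.continuous y).const_mul (Real.sin θ))

lemma strictMono_rotatedAbscissa (hφ : IsFlatProfile φ) (hθ : θ ∈ Ico 0 (π / 2)) :
    StrictMono (rotatedAbscissa φ θ) :=
  strictMono_of_deriv_pos fun y =>
    (hφ.hasDerivAt_rotatedAbscissa θ y).deriv ▸ hφ.rotatedSpeed_pos hθ y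

lemma cos_mul_le_rotatedAbscissa (hφ : IsFlatProfile φ) (hθ : θ ∈ Ico 0 (π / 2)) (y : ℝ) :
    Real.cos θ * y ≤ rotatedAbscissa φ θ y :=
  le_add_of_nonneg_right <| mul_nonneg
    (Real.sin_nonneg_of_mem_Icc ⟨hθ.1, by linarith [hθ.1, hθ.2]⟩) (hφ.primitive.primitive.nonneg y)

lemma rotatedAbscissa_of_nonpos (hφ : IsFlatProfile φ) (θ : ℝ) {y : ℝ} (hy : y ≤ 0) :
    rotatedAbscissa φ θ y = Real.cos θ * y := by
  simp [rotatedAbscissa, hφ.primitive.primitive.eqOn_zero hy]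

lemma surjective_rotatedAbscissa (hφ : IsFlatProfile φ) (hθ : θ ∈ Ico 0 (π / 2)) :
    Function.Surjective (rotatedAbscissa φ θ) := by
  have hcos : 0 < Real.cos θ := Real.cos_pos_of_mem_Ioo ⟨by linarith [hθ.1, hθ.2], hθ.2⟩
  refine Continuous.surjective
    (continuous_iff_continuousAt.2 fun y => (hφ.hasDerivAt_rotatedAbscissa θ y).continuousAt) ?_ ?_
  · exact tendsto_atTop_mono (hφ.cos_mul_le_rotatedAbscissa hθ) (tendsto_id.const_mul_atTop hcos)
  · refine (tendsto_id.const_mul_atBot hcos).congr' ?_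
    filter_upwards [eventually_le_atBot 0] with y hy
    exact (hφ.rotatedAbscissa_of_nonpos θ hy).symm

lemma rotatedAbscissa_rotatedParam (hφ : IsFlatProfile φ) (hθ : θ ∈ Ico 0 (π / 2)) (s : ℝ) :
    rotatedAbscissa φ θ (rotatedParam φ θ s) = s :=
  Function.rightInverse_invFun (hφ.surjective_rotatedAbscissa hθ) s

lemma hasDerivAt_rotatedParam (hφ : IsFlatProfile φ) (hθ : θ ∈ Ico 0 (π / 2)) (s : ℝ) :
    HasDerivAt (rotatedParam φ θ) (rotatedSpeed φ θ (rotatedParam φ θ s))⁻¹ s :=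
  hasDerivAt_invFun_of_pos (hφ.hasDerivAt_rotatedAbscissa θ) (hφ.rotatedSpeed_pos hθ)
    (hφ.surjective_rotatedAbscissa hθ) s

lemma rotatedParam_zero (hφ : IsFlatProfile φ) (hθ : θ ∈ Ico 0 (π / 2)) :
    rotatedParam φ θ 0 = 0 :=
  (hφ.strictMono_rotatedAbscissa hθ).injective <| by
    rw [hφ.rotatedAbscissa_rotatedParam hθ, hφ.rotatedAbscissa_of_nonpos θ le_rfl, mul_zero]

lemma strictMono_rotatedParam (hφ : IsFlatProfile φ) (hθ : θ ∈ Ico 0 (π / 2)) :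
    StrictMono (rotatedParam φ θ) :=
  strictMono_of_deriv_pos fun s =>
    (hφ.hasDerivAt_rotatedParam hθ s).deriv ▸ inv_pos.2 (hφ.rotatedSpeed_pos hθ _)

lemma rotatedParam_le_two_mul (hφ : IsFlatProfile φ) (hθ : θ ∈ Icc 0 (π / 3)) {s : ℝ}
    (hs : 0 ≤ s) : rotatedParam φ θ s ≤ 2 * s := by
  have hθ' := Icc_pi_div_three_subset hθ
  have hcos := one_half_le_cos hθ
  have hle := hφ.cos_mul_le_rotatedAbscissa hθ' (rotatedParam φ θ s)
  rw [hφ.rotatedAbscissa_rotatedParam hθ'] at hle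
  nlinarith

lemma rotatedProfile_pos (hφ : IsFlatProfile φ) (hθ : θ ∈ Icc 0 (π / 3)) {s R : ℝ}
    (hpos : ∀ y ∈ Ioc 0 R, 0 < φ y) (hs : s ∈ Ioc 0 (R / 2)) : 0 < rotatedProfile φ θ s := by
  have hθ' := Icc_pi_div_three_subset hθ
  refine div_pos (hpos _ ⟨?_, ?_⟩) (pow_pos (hφ.rotatedSpeed_pos hθ' _) 3)
  · simpa only [hφ.rotatedParam_zero hθ'] using hφ.strictMono_rotatedParam hθ' hs.1
  · linarith [hφ.rotatedParam_le_two_mul hθ hs.1.le, hs.2]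

lemma rotatedProfile_angle_zero (hφ : IsFlatProfile φ) : rotatedProfile φ 0 = φ := by
  funext s
  have hparam : rotatedParam φ 0 s = s := by
    simpa [rotatedAbscissa] using
      hφ.rotatedAbscissa_rotatedParam (left_mem_Ico.2 Real.pi_div_two_pos) s
  simp [rotatedProfile, rotatedSpeed, hparam]

lemma hasDerivAt_rotatedGraph (hφ : IsFlatProfile φ) (hθ : θ ∈ Ico 0 (π / 2)) (s : ℝ) :
    HasDerivAt (rotatedGraph φ θ) ((Real.cos θ * primitive φ (rotatedParam φ θ s) -
      Real.sin θ) / rotatedSpeed φ θ (rotatedParam φ θ s)) s := by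
  have hparam := hφ.hasDerivAt_rotatedParam hθ s
  have hheight := (hasDerivAt_primitive hφ.primitive.contDiff.continuous _).comp s hparam
  refine ((hheight.const_mul (Real.cos θ)).sub (hparam.const_mul (Real.sin θ))).congr_deriv ?_
  ring

lemma hasDerivAt_deriv_rotatedGraph (hφ : IsFlatProfile φ) (hθ : θ ∈ Ico 0 (π / 2)) (s : ℝ) :
    HasDerivAt (deriv (rotatedGraph φ θ)) (rotatedProfile φ θ s) s := by
  have hspeed := (hφ.rotatedSpeed_pos hθ (rotatedParam φ θ s)).ne'
  have hslope := (hasDerivAt_primitive hφ.contDiff.continuous _).comp s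
    (hφ.hasDerivAt_rotatedParam hθ s)
  rw [funext fun s => (hφ.hasDerivAt_rotatedGraph hθ s).deriv]
  refine (((hslope.const_mul (Real.cos θ)).sub_const (Real.sin θ)).div
    ((hslope.const_mul (Real.sin θ)).const_add (Real.cos θ)) hspeed).congr_deriv ?_
  change _ / rotatedSpeed φ θ (rotatedParam φ θ s) ^ 2 = _
  simp only [rotatedProfile, Function.comp_apply]
  field_simp
  linear_combination φ (rotatedParam φ θ s) * Real.sin_sq_add_cos_sq θ

lemma rotatedGraph_zero (hφ : IsFlatProfile φ) (hθ : θ ∈ Ico 0 (π / 2)) :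
    rotatedGraph φ θ 0 = 0 := by
  simp [rotatedGraph, hφ.rotatedParam_zero hθ]

lemma deriv_rotatedGraph_zero (hφ : IsFlatProfile φ) (hθ : θ ∈ Ico 0 (π / 2)) :
    deriv (rotatedGraph φ θ) 0 = -Real.tan θ := by
  rw [(hφ.hasDerivAt_rotatedGraph hθ 0).deriv, hφ.rotatedParam_zero hθ, Real.tan_eq_sin_div_cos]
  simp [rotatedSpeed, neg_div]

lemma contDiff_rotatedSpeed (hφ : IsFlatProfile φ) :
    ContDiff ℝ ∞ fun p : ℝ × ℝ => rotatedSpeed φ p.1 p.2 := by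
  have := hφ.primitive.contDiff
  unfold rotatedSpeed
  fun_prop

lemma isOpen_rotatedSpeed_pos (hφ : IsFlatProfile φ) :
    IsOpen {p : ℝ × ℝ | 0 < rotatedSpeed φ p.1 p.2} :=
  isOpen_lt continuous_const hφ.contDiff_rotatedSpeed.continuous

lemma contDiffOn_inv_rotatedSpeed (hφ : IsFlatProfile φ) :
    ContDiffOn ℝ ∞ (fun p : ℝ × ℝ => (rotatedSpeed φ p.1 p.2)⁻¹)
      {p | 0 < rotatedSpeed φ p.1 p.2} :=
  hφ.contDiff_rotatedSpeed.contDiffOn.inv fun _ hp => ne_of_gt hp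

lemma contDiffOn_div_rotatedSpeed_pow (hφ : IsFlatProfile φ) :
    ContDiffOn ℝ ∞ (fun p : ℝ × ℝ => φ p.2 / rotatedSpeed φ p.1 p.2 ^ 3)
      {p | 0 < rotatedSpeed φ p.1 p.2} :=
  (hφ.contDiff.comp contDiff_snd).contDiffOn.div (hφ.contDiff_rotatedSpeed.pow 3).contDiffOn
    fun _ hp => pow_ne_zero 3 (ne_of_gt hp)

lemma rotatedProfile_isFlatProfile (hφ : IsFlatProfile φ) (hθ : θ ∈ Ico 0 (π / 2)) :
    IsFlatProfile (rotatedProfile φ θ) where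
  contDiff := contDiff_comp_of_hasDerivAt hφ.isOpen_rotatedSpeed_pos
    hφ.contDiffOn_inv_rotatedSpeed hφ.contDiffOn_div_rotatedSpeed_pow
    (fun _ => hφ.rotatedSpeed_pos hθ _) (hφ.hasDerivAt_rotatedParam hθ)
  nonneg s := div_nonneg (hφ.nonneg _) (pow_pos (hφ.rotatedSpeed_pos hθ _) 3).le
  eqOn_zero s hs := by
    have hparam : rotatedParam φ θ s ≤ 0 := by
      simpa only [hφ.rotatedParam_zero hθ] using (hφ.strictMono_rotatedParam hθ).monotone hs
    simp [rotatedProfile, hφ.eqOn_zero hparam]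

lemma exists_abs_iteratedDeriv_rotatedProfile_le (hφ : IsFlatProfile φ) (j : ℕ) (R : ℝ) :
    ∃ C, ∀ θ ∈ Icc 0 (π / 3), ∀ s ∈ Icc 0 R, |iteratedDeriv j (rotatedProfile φ θ) s| ≤ C := by
  obtain ⟨D, hD, hDeq⟩ := exists_iteratedDeriv_comp_eq hφ.isOpen_rotatedSpeed_pos
    hφ.contDiffOn_inv_rotatedSpeed hφ.contDiffOn_div_rotatedSpeed_pow j
  have hsub : Icc 0 (π / 3) ×ˢ Icc 0 (2 * R) ⊆ {p : ℝ × ℝ | 0 < rotatedSpeed φ p.1 p.2} :=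
    fun p hp => hφ.rotatedSpeed_pos (Icc_pi_div_three_subset hp.1) p.2
  obtain ⟨C, hC⟩ := (isCompact_Icc.prod isCompact_Icc).exists_bound_of_continuousOn
    (hD.continuousOn.mono hsub)
  refine ⟨C, fun θ hθ s hs => ?_⟩
  have hθ' := Icc_pi_div_three_subset hθ
  have hparam : rotatedParam φ θ s ∈ Icc 0 (2 * R) := by
    refine ⟨?_, by linarith [hφ.rotatedParam_le_two_mul hθ hs.1, hs.2]⟩
    rw [← hφ.rotatedParam_zero hθ']
    exact (hφ.strictMono_rotatedParam hθ').monotone hs.1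
  have hderiv := congrFun (hDeq θ _ (fun _ => hφ.rotatedSpeed_pos hθ' _)
    (hφ.hasDerivAt_rotatedParam hθ')) s
  exact hderiv ▸ hC (θ, rotatedParam φ θ s) ⟨hθ, hparam⟩

lemma exists_abs_iteratedDeriv_rotatedProfile_le_mul_pow (hφ : IsFlatProfile φ) (j K : ℕ)
    (R : ℝ) : ∃ C, ∀ θ ∈ Icc 0 (π / 3), ∀ s ∈ Icc 0 R,
      |iteratedDeriv j (rotatedProfile φ θ) s| ≤ C * s ^ K := by
  obtain ⟨C, hC⟩ := hφ.exists_abs_iteratedDeriv_rotatedProfile_le (j + K) R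
  refine ⟨C, fun θ hθ s hs => ?_⟩
  have hprofile := hφ.rotatedProfile_isFlatProfile (Icc_pi_div_three_subset hθ)
  exact abs_iteratedDeriv_le_mul_pow_of_flat hprofile.contDiff hprofile.iteratedDeriv_apply_zero
    (hC θ hθ) hs

end IsFlatProfile

end RotatedGraph

section Splicing

/-- A smooth bump, positive on `(1/4, 3/4)` and zero elsewhere. -/
def bump (t : ℝ) : ℝ := cutoff t * cutoff (1 - t)

lemma contDiff_bump : ContDiff ℝ ∞ bump :=
  contDiff_cutoff.mul (contDiff_cutoff.comp (by fun_prop))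

lemma bump_nonneg (t : ℝ) : 0 ≤ bump t := mul_nonneg (cutoff_nonneg _) (cutoff_nonneg _)

lemma bump_of_le {t : ℝ} (ht : t ≤ 1 / 4) : bump t = 0 := by
  rw [bump, cutoff_eq_zero (by linarith : 3 / 4 ≤ 1 - t), mul_zero]

lemma bump_one_sub (t : ℝ) : bump (1 - t) = bump t := by
  rw [bump, bump, sub_sub_cancel, mul_comm]

lemma primitive_bump_one_pos : 0 < primitive bump 1 := by
  refine intervalIntegral.integral_pos one_pos contDiff_bump.continuous.continuousOn
    (fun t _ => bump_nonneg t) ⟨1 / 2, by norm_num, ?_⟩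
  exact mul_pos (cutoff_pos (by norm_num)) (cutoff_pos (by norm_num))

/-- `p` cut off smoothly between `h/2` and `3h/4`. -/
def windowed (h : ℝ) (p : ℝ → ℝ) (x : ℝ) : ℝ := p x * cutoff (x / h)

/-- The function on `[0, h]` equal to `p` near `0` and to the reflection of `q` near `h`, with a
multiple of the rescaled bump added in the middle to adjust the integral. -/
def splice (h : ℝ) (p q : ℝ → ℝ) (c x : ℝ) : ℝ :=
  windowed h p x + windowed h q (h - x) + c * bump (x / h)

variable {h : ℝ} {p q : ℝ → ℝ} {c x : ℝ}

lemma contDiff_windowed (h : ℝ) (hp : ContDiff ℝ ∞ p) : ContDiff ℝ ∞ (windowed h p) :=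
  hp.mul (contDiff_cutoff.comp (by fun_prop))

lemma windowed_nonneg (hp : IsFlatProfile p) (x : ℝ) : 0 ≤ windowed h p x :=
  mul_nonneg (hp.nonneg x) (cutoff_nonneg _)

lemma windowed_le (hp : IsFlatProfile p) (h x : ℝ) : windowed h p x ≤ p x :=
  mul_le_of_le_one_right (hp.nonneg x) (cutoff_le_one _)

lemma windowed_pos (hh : 0 < h) (hpx : 0 < p x) (hx : x < 3 / 4 * h) : 0 < windowed h p x :=
  mul_pos hpx (cutoff_pos ((div_lt_iff₀ hh).2 hx))

lemma windowed_of_ge (hh : 0 < h) (hx : 3 / 4 * h ≤ x) : windowed h p x = 0 := by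
  rw [windowed, cutoff_eq_zero ((le_div_iff₀ hh).2 hx), mul_zero]

lemma windowed_of_le (hh : 0 < h) (hx : x ≤ 1 / 2 * h) : windowed h p x = p x := by
  rw [windowed, cutoff_eq_one ((div_le_iff₀ hh).2 hx), mul_one]

lemma contDiff_splice (h : ℝ) (hp : ContDiff ℝ ∞ p) (hq : ContDiff ℝ ∞ q) (c : ℝ) :
    ContDiff ℝ ∞ (splice h p q c) :=
  ((contDiff_windowed h hp).add ((contDiff_windowed h hq).comp (by fun_prop))).add
    (contDiff_const.mul (contDiff_bump.comp (by fun_prop)))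

lemma splice_reflect (hh : 0 < h) : splice h p q c (h - x) = splice h q p c x := by
  rw [splice, splice, sub_sub_cancel, sub_div, div_self hh.ne', bump_one_sub,
    add_comm (windowed _ _ _)]

lemma splice_of_le (hh : 0 < h) (hx : x ≤ h / 4) : splice h p q c x = p x := by
  rw [splice, windowed_of_le hh (by linarith), windowed_of_ge hh (by linarith),
    bump_of_le ((div_le_iff₀ hh).2 (by linarith)), mul_zero, add_zero, add_zero]

lemma splice_pos (hh : 0 < h) (hp : IsFlatProfile p) (hq : IsFlatProfile q) (hc : 0 ≤ c)
    (hp_pos : ∀ y ∈ Ioo 0 h, 0 < p y) (hq_pos : ∀ y ∈ Ioo 0 h, 0 < q y) (hx : x ∈ Ioo 0 h) :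
    0 < splice h p q c x := by
  refine add_pos_of_pos_of_nonneg ?_ (mul_nonneg hc (bump_nonneg _))
  rcases lt_or_ge x (3 / 4 * h) with hlt | hge
  · exact add_pos_of_pos_of_nonneg (windowed_pos hh (hp_pos x hx) hlt) (windowed_nonneg hq _)
  · exact add_pos_of_nonneg_of_pos (windowed_nonneg hp _)
      (windowed_pos hh (hq_pos _ ⟨by linarith [hx.2], by linarith [hx.1]⟩) (by linarith))

/-- The second derivative, extended by zero, of a convex arc over `[0, h]` with positive curvature
inside and infinitely flat ends. -/
structure IsArcProfile (h : ℝ) (P : ℝ → ℝ) : Prop where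
  pos_length : 0 < h
  contDiff : ContDiff ℝ ∞ P
  eqOn_zero_left : EqOn P 0 (Iic 0)
  eqOn_zero_right : EqOn P 0 (Ici h)
  pos : ∀ x ∈ Ioo 0 h, 0 < P x

lemma isArcProfile_splice (hh : 0 < h) (hp : IsFlatProfile p) (hq : IsFlatProfile q) (hc : 0 ≤ c)
    (hp_pos : ∀ y ∈ Ioo 0 h, 0 < p y) (hq_pos : ∀ y ∈ Ioo 0 h, 0 < q y) :
    IsArcProfile h (splice h p q c) where
  pos_length := hh
  contDiff := contDiff_splice h hp.contDiff hq.contDiff c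
  eqOn_zero_left x hx := by
    rw [splice_of_le hh (by linarith [mem_Iic.1 hx]), hp.eqOn_zero hx]
  eqOn_zero_right x hx := by
    have hx' : h - x ≤ 0 := sub_nonpos.2 hx
    rw [← sub_sub_cancel h x, splice_reflect hh, splice_of_le hh (by linarith), hq.eqOn_zero hx']
    rfl
  pos _ hx := splice_pos hh hp hq hc hp_pos hq_pos hx

lemma primitive_splice (hh : 0 < h) (hp : ContDiff ℝ ∞ p) (hq : ContDiff ℝ ∞ q) (c : ℝ) :
    primitive (splice h p q c) h =
      primitive (splice h p q 0) h + c * (h * primitive bump 1) := by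
  have hbump : ∫ x in (0 : ℝ)..h, bump (x / h) = h * primitive bump 1 := by
    rw [intervalIntegral.integral_comp_div _ hh.ne', zero_div, div_self hh.ne', smul_eq_mul,
      primitive]
  have hsplice : splice h p q c = fun x => splice h p q 0 x + c * bump (x / h) := by
    funext x
    rw [splice, splice, zero_mul, add_zero]
  have hcont : Continuous fun x => c * bump (x / h) :=
    continuous_const.mul (contDiff_bump.continuous.comp (continuous_id.div_const h))
  rw [← hbump, hsplice, primitive, primitive, intervalIntegral.integral_add
    ((contDiff_splice h hp hq 0).continuous.intervalIntegrable _ _)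
    (hcont.intervalIntegrable _ _), intervalIntegral.integral_const_mul]

lemma primitive_splice_zero_mem_Icc (hh : 0 < h) (hp : IsFlatProfile p) (hq : IsFlatProfile q)
    {A : ℝ} (hpA : ∀ y ∈ Icc 0 h, p y ≤ A) (hqA : ∀ y ∈ Icc 0 h, q y ≤ A) :
    primitive (splice h p q 0) h ∈ Icc 0 (2 * A * h) := by
  have splice_zero : ∀ x, splice h p q 0 x = windowed h p x + windowed h q (h - x) := fun x => by
    rw [splice, zero_mul, add_zero]
  refine ⟨primitive_nonneg (fun x => ?_) hh.le, ?_⟩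
  · rw [splice_zero]
    exact add_nonneg (windowed_nonneg hp _) (windowed_nonneg hq _)
  · calc primitive (splice h p q 0) h ≤ ∫ _ in (0 : ℝ)..h, 2 * A := by
          refine intervalIntegral.integral_mono_on hh.le
            ((contDiff_splice h hp.contDiff hq.contDiff 0).continuous.intervalIntegrable _ _)
            intervalIntegrable_const fun x hx => ?_
          rw [splice_zero]
          linarith [(windowed_le hp h x).trans (hpA x hx), (windowed_le hq h (h - x)).trans
            (hqA (h - x) ⟨by linarith [hx.2], by linarith [hx.1]⟩)]
      _ = 2 * A * h := by
          rw [intervalIntegral.integral_const, sub_zero, smul_eq_mul, mul_comm]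

lemma exists_primitive_splice_eq (hh : 0 < h) (hp : IsFlatProfile p) (hq : IsFlatProfile q)
    {A t : ℝ} (hpA : ∀ y ∈ Icc 0 h, p y ≤ A) (hqA : ∀ y ∈ Icc 0 h, q y ≤ A)
    (ht : 2 * A * h ≤ t) :
    ∃ c ∈ Icc 0 (t / (h * primitive bump 1)), primitive (splice h p q c) h = t := by
  have hB : 0 < h * primitive bump 1 := mul_pos hh primitive_bump_one_pos
  obtain ⟨hm0, hmA⟩ := primitive_splice_zero_mem_Icc hh hp hq hpA hqA
  refine ⟨(t - primitive (splice h p q 0) h) / (h * primitive bump 1),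
    ⟨div_nonneg (by linarith) hB.le, ?_⟩, ?_⟩
  · gcongr
    linarith
  · rw [primitive_splice hh hp.contDiff hq.contDiff, div_mul_cancel₀ _ hB.ne', add_sub_cancel]

lemma abs_iteratedDeriv_mul_le {u v : ℝ → ℝ} (hu : ContDiff ℝ ∞ u) (hv : ContDiff ℝ ∞ v)
    {A B : ℝ} {i : ℕ} (hA : ∀ j ≤ i, |iteratedDeriv j u x| ≤ A)
    (hB : ∀ j ≤ i, |iteratedDeriv j v x| ≤ B) :
    |iteratedDeriv i (fun y => u y * v y) x| ≤ 2 ^ i * (A * B) := by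
  have hA0 : 0 ≤ A := (abs_nonneg _).trans (hA 0 (Nat.zero_le i))
  rw [iteratedDeriv_fun_mul (hu.of_le (mod_cast le_top)).contDiffAt
    (hv.of_le (mod_cast le_top)).contDiffAt]
  calc |∑ j ∈ Finset.range (i + 1), (i.choose j : ℝ) * iteratedDeriv j u x *
          iteratedDeriv (i - j) v x|
      ≤ ∑ j ∈ Finset.range (i + 1), (i.choose j : ℝ) * (A * B) := by
        refine Finset.abs_sum_le_sum_abs _ _ |>.trans (Finset.sum_le_sum fun j hj => ?_)
        rw [abs_mul, abs_mul, mul_assoc, Nat.abs_cast]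
        have := hA j (Nat.lt_succ_iff.1 (Finset.mem_range.1 hj))
        have := hB (i - j) (Nat.sub_le i j)
        gcongr
    _ = 2 ^ i * (A * B) := by
        rw [← Finset.sum_mul]
        exact_mod_cast congrArg (fun n : ℕ => (n : ℝ) * (A * B)) (Nat.sum_range_choose i)

lemma exists_abs_iteratedDeriv_comp_div_le {χ : ℝ → ℝ} (hχ : ContDiff ℝ ∞ χ) (N : ℕ) :
    ∃ C, 0 ≤ C ∧ ∀ h ∈ Ioc (0 : ℝ) 1, ∀ i ≤ N, ∀ x ∈ Icc 0 h,
      |iteratedDeriv i (fun y => χ (y / h)) x| ≤ C / h ^ N := by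
  choose B hB using fun j : ℕ => isCompact_Icc.exists_bound_of_continuousOn
    (s := Icc (0 : ℝ) 1) (hχ.continuous_iteratedDeriv j (mod_cast le_top)).continuousOn
  have hB0 : ∀ j, 0 ≤ B j := fun j => (norm_nonneg _).trans (hB j 0 (by simp))
  refine ⟨∑ j ∈ Finset.range (N + 1), B j, Finset.sum_nonneg fun j _ => hB0 j,
    fun h hh i hi x hx => ?_⟩
  have hmem : h⁻¹ * x ∈ Icc (0 : ℝ) 1 :=
    ⟨mul_nonneg (inv_nonneg.2 hh.1.le) hx.1, by
      rw [← div_eq_inv_mul]; exact div_le_one_of_le₀ hx.2 hh.1.le⟩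
  have hderiv : iteratedDeriv i (fun y => χ (y / h)) x =
      h⁻¹ ^ i * iteratedDeriv i χ (h⁻¹ * x) := by
    simp only [div_eq_inv_mul]
    exact congrFun (iteratedDeriv_comp_const_mul (contDiff_infty.1 hχ i) h⁻¹) x
  calc |iteratedDeriv i (fun y => χ (y / h)) x|
      = h⁻¹ ^ i * |iteratedDeriv i χ (h⁻¹ * x)| := by
        rw [hderiv, abs_mul, abs_of_nonneg (pow_nonneg (inv_nonneg.2 hh.1.le) i)]
    _ ≤ h⁻¹ ^ N * ∑ j ∈ Finset.range (N + 1), B j := by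
        refine mul_le_mul (pow_le_pow_right₀ ((one_le_inv₀ hh.1).2 hh.2) hi) ?_ (abs_nonneg _)
          (pow_nonneg (inv_nonneg.2 hh.1.le) N)
        exact (hB i _ hmem).trans (Finset.single_le_sum (fun j _ => hB0 j)
          (Finset.mem_range.2 (Nat.lt_succ_iff.2 hi)))
    _ = _ := by rw [inv_pow, div_eq_inv_mul]

lemma exists_abs_iteratedDeriv_windowed_le (N : ℕ) :
    ∃ C, 0 ≤ C ∧ ∀ h ∈ Ioc (0 : ℝ) 1, ∀ (p : ℝ → ℝ) (A : ℝ), ContDiff ℝ ∞ p →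
      (∀ j ≤ N, ∀ x ∈ Icc 0 h, |iteratedDeriv j p x| ≤ A) →
      ∀ i ≤ N, ∀ x ∈ Icc 0 h, |iteratedDeriv i (windowed h p) x| ≤ C * A / h ^ N := by
  obtain ⟨C, hC0, hC⟩ := exists_abs_iteratedDeriv_comp_div_le contDiff_cutoff N
  refine ⟨2 ^ N * C, by positivity, fun h hh p A hp hA i hi x hx => ?_⟩
  have hh0 := hh.1
  have hA0 : 0 ≤ A := (abs_nonneg _).trans (hA i hi x hx)
  calc |iteratedDeriv i (windowed h p) x| ≤ 2 ^ i * (A * (C / h ^ N)) :=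
        abs_iteratedDeriv_mul_le hp (contDiff_cutoff.comp (by fun_prop))
          (fun j hj => hA j (hj.trans hi) x hx) fun j hj => hC h hh j (hj.trans hi) x hx
    _ ≤ 2 ^ N * (A * (C / h ^ N)) := by gcongr; norm_num
    _ = 2 ^ N * C * A / h ^ N := by ring

lemma exists_abs_iteratedDeriv_splice_le (N : ℕ) :
    ∃ C, 0 ≤ C ∧ ∀ h ∈ Ioc (0 : ℝ) 1, ∀ (p q : ℝ → ℝ) (A c : ℝ), ContDiff ℝ ∞ p →
      ContDiff ℝ ∞ q → 0 ≤ c → (∀ j ≤ N, ∀ x ∈ Icc 0 h, |iteratedDeriv j p x| ≤ A) →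
      (∀ j ≤ N, ∀ x ∈ Icc 0 h, |iteratedDeriv j q x| ≤ A) →
      ∀ i ≤ N, ∀ x ∈ Icc 0 h, |iteratedDeriv i (splice h p q c) x| ≤ C * (2 * A + c) / h ^ N := by
  obtain ⟨C₁, hC₁0, hC₁⟩ := exists_abs_iteratedDeriv_windowed_le N
  obtain ⟨C₂, hC₂0, hC₂⟩ := exists_abs_iteratedDeriv_comp_div_le contDiff_bump N
  refine ⟨C₁ + C₂, by positivity, fun h hh p q A c hp hq hc hpA hqA i hi x hx => ?_⟩
  have hh0 := hh.1
  have hA0 : 0 ≤ A := (abs_nonneg _).trans (hpA i hi x hx)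
  have hx' : h - x ∈ Icc 0 h := ⟨by linarith [hx.2], by linarith [hx.1]⟩
  have hreflect : |iteratedDeriv i (fun y => windowed h q (h - y)) x| =
      |iteratedDeriv i (windowed h q) (h - x)| := by
    simp only [iteratedDeriv_comp_const_sub, smul_eq_mul, abs_mul, abs_neg_one_pow, one_mul]
  have hwp : ContDiffAt ℝ i (windowed h p) x :=
    ((contDiff_windowed h hp).of_le (mod_cast le_top)).contDiffAt
  have hwq : ContDiffAt ℝ i (fun y => windowed h q (h - y)) x :=
    (((contDiff_windowed h hq).of_le (mod_cast le_top)).comp (by fun_prop)).contDiffAt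
  have hbump : ContDiffAt ℝ i (fun y => bump (y / h)) x :=
    ((contDiff_bump.of_le (mod_cast le_top)).comp (by fun_prop)).contDiffAt
  calc |iteratedDeriv i (splice h p q c) x|
      ≤ |iteratedDeriv i (windowed h p) x| + |iteratedDeriv i (windowed h q) (h - x)|
          + c * |iteratedDeriv i (fun y => bump (y / h)) x| := by
        unfold splice
        rw [iteratedDeriv_fun_add (hwp.add hwq) (contDiffAt_const.mul hbump),
          iteratedDeriv_fun_add hwp hwq, iteratedDeriv_const_mul_field, ← hreflect,
          ← abs_of_nonneg hc, ← abs_mul, abs_of_nonneg hc]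
        exact abs_add_three _ _ _
    _ ≤ C₁ * A / h ^ N + C₁ * A / h ^ N + c * (C₂ / h ^ N) := by
        gcongr
        exacts [hC₁ h hh p A hp hpA i hi x hx, hC₁ h hh q A hq hqA i hi _ hx', hC₂ h hh i hi x hx]
    _ ≤ (C₁ + C₂) * (2 * A + c) / h ^ N := by
        rw [← mul_div_assoc, ← add_div, ← add_div]
        gcongr
        nlinarith [mul_nonneg hC₁0 hc, mul_nonneg hC₂0 hA0]

/-- The second derivative of a convex arc over `[0, h]` turning by `θ`, congruent near both ends to
an initial piece of the graph of `primitive (primitive φ)`. -/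
structure IsModelArcProfile (φ : ℝ → ℝ) (θ h : ℝ) (P : ℝ → ℝ) : Prop extends IsArcProfile h P where
  eqOn_left : EqOn P φ (Icc 0 (h / 4))
  eqOn_right : EqOn (fun s => P (h - s)) (rotatedProfile φ θ) (Icc 0 (h / 4))
  primitive_length : primitive P h = Real.tan θ

variable {φ : ℝ → ℝ} {θ R : ℝ}

lemma tan_le_two_mul (hθ : θ ∈ Icc 0 (π / 3)) : Real.tan θ ≤ 2 * θ := by
  have hcos := one_half_le_cos hθ
  rw [Real.tan_eq_sin_div_cos, div_le_iff₀ (by linarith)]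
  nlinarith [Real.sin_le hθ.1, hθ.1]

lemma exists_isModelArcProfile_splice (hφ : IsFlatProfile φ) (hpos : ∀ y ∈ Ioc 0 R, 0 < φ y)
    (hθ : θ ∈ Icc 0 (π / 3)) (hh : h ∈ Ioc 0 (R / 2)) {A : ℝ} (hφA : ∀ y ∈ Icc 0 h, φ y ≤ A)
    (hrotA : ∀ y ∈ Icc 0 h, rotatedProfile φ θ y ≤ A) (hA : 2 * A * h ≤ θ) :
    ∃ c ∈ Icc 0 (2 * θ / (h * primitive bump 1)),
      IsModelArcProfile φ θ h (splice h φ (rotatedProfile φ θ) c) := by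
  have hrot := hφ.rotatedProfile_isFlatProfile (Icc_pi_div_three_subset hθ)
  have hθtan : θ ≤ Real.tan θ := Real.le_tan hθ.1 (Icc_pi_div_three_subset hθ).2
  obtain ⟨c, hc, hturn⟩ := exists_primitive_splice_eq hh.1 hφ hrot hφA hrotA (hA.trans hθtan)
  refine ⟨c, ⟨hc.1, hc.2.trans ?_⟩, isArcProfile_splice hh.1 hφ hrot hc.1
    (fun y hy => hpos y ⟨hy.1, ?_⟩)
    (fun y hy => hφ.rotatedProfile_pos hθ hpos ⟨hy.1, hy.2.le.trans hh.2⟩),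
    fun x hx => splice_of_le hh.1 hx.2, fun s hs => ?_, hturn⟩
  · exact div_le_div_of_nonneg_right (tan_le_two_mul hθ)
      (mul_pos hh.1 primitive_bump_one_pos).le
  · linarith [hy.2, hh.1, hh.2]
  · exact (splice_reflect hh.1).trans (splice_of_le hh.1 hs.2)

lemma IsFlatProfile.exists_forall_abs_iteratedDeriv_rotatedProfile_le (hφ : IsFlatProfile φ)
    (N K : ℕ) : ∃ M, 0 ≤ M ∧ ∀ h ∈ Icc (0 : ℝ) 1, ∀ θ ∈ Icc 0 (π / 3), ∀ j ≤ N, ∀ s ∈ Icc 0 h,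
      |iteratedDeriv j (rotatedProfile φ θ) s| ≤ M * h ^ K := by
  choose C hC using fun j => hφ.exists_abs_iteratedDeriv_rotatedProfile_le_mul_pow j K 1
  refine ⟨∑ j ∈ Finset.range (N + 1), |C j|, Finset.sum_nonneg fun j _ => abs_nonneg _,
    fun h hh θ hθ j hj s hs => (hC j θ hθ s ⟨hs.1, hs.2.trans hh.2⟩).trans ?_⟩
  have hCj : C j ≤ ∑ j ∈ Finset.range (N + 1), |C j| := (le_abs_self _).trans
    (Finset.single_le_sum (f := fun j => |C j|) (fun j _ => abs_nonneg _)
      (Finset.mem_range.2 (Nat.lt_succ_iff.2 hj)))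
  have hs0 := hs.1
  gcongr
  exact hs.2

lemma eventually_const_mul_lt_one (a : ℝ) : ∀ᶠ h in 𝓝[>] (0 : ℝ), a * h < 1 :=
  (((continuous_const_mul a).tendsto' 0 0 (mul_zero a)).mono_left nhdsWithin_le_nhds).eventually
    (gt_mem_nhds one_pos)

-- Both pieces are `O(h ^ (N + 2))`, so most of the turning `θ ~ h ^ (N + 2)` comes from the bump,
-- whose coefficient `O(h ^ (N + 1))` still beats the factor `h ^ (-N)` lost by rescaling.
lemma eventually_exists_isModelArcProfile (hφ : IsFlatProfile φ) (hR : 0 < R)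
    (hpos : ∀ y ∈ Ioc 0 R, 0 < φ y) (N : ℕ) :
    ∀ᶠ h in 𝓝[>] 0, ∀ θ ∈ Icc (h ^ (N + 2) / 2) (h ^ (N + 2)), ∃ P,
      IsModelArcProfile φ θ h P ∧ ∀ i ≤ N, ∀ x ∈ Icc 0 h, |iteratedDeriv i P x| ≤ 1 := by
  obtain ⟨M, hM0, hM⟩ := hφ.exists_forall_abs_iteratedDeriv_rotatedProfile_le N (N + 2)
  obtain ⟨C, hC0, hC⟩ := exists_abs_iteratedDeriv_splice_le N
  set B := primitive bump 1
  have hB0 : 0 < B := primitive_bump_one_pos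
  filter_upwards [self_mem_nhdsWithin, eventually_const_mul_lt_one 1,
    eventually_const_mul_lt_one (2 / R), eventually_const_mul_lt_one (4 * M),
    eventually_const_mul_lt_one (C * (2 * M + 2 / B))]
    with h (hh0 : 0 < h) hh1 hhR hhM hhC θ hθ
  rw [one_mul] at hh1
  rw [div_mul_eq_mul_div, div_lt_one hR] at hhR
  have hpow1 : h ^ (N + 2) ≤ 1 := pow_le_one₀ hh0.le hh1.le
  have hθ3 : θ ∈ Icc 0 (π / 3) :=
    ⟨le_trans (by positivity) hθ.1, by linarith [hθ.2, Real.pi_gt_three]⟩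
  have hrot := hM h ⟨hh0.le, hh1.le⟩ θ hθ3
  have hφM : ∀ j ≤ N, ∀ s ∈ Icc 0 h, |iteratedDeriv j φ s| ≤ M * h ^ (N + 2) :=
    hφ.rotatedProfile_angle_zero ▸ hM h ⟨hh0.le, hh1.le⟩ 0 ⟨le_rfl, by positivity⟩
  have hturn : 2 * (M * h ^ (N + 2)) * h ≤ θ := by
    have : 4 * M * h * h ^ (N + 2) ≤ 1 * h ^ (N + 2) := by gcongr
    linarith [hθ.1]
  obtain ⟨c, hc, hP⟩ := exists_isModelArcProfile_splice hφ hpos hθ3 ⟨hh0, by linarith⟩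
    (fun y hy => (le_abs_self _).trans (hφM 0 N.zero_le y hy))
    (fun y hy => (le_abs_self _).trans (hrot 0 N.zero_le y hy)) hturn
  refine ⟨_, hP, fun i hi x hx => ?_⟩
  calc |iteratedDeriv i (splice h φ (rotatedProfile φ θ) c) x|
      ≤ C * (2 * (M * h ^ (N + 2)) + c) / h ^ N :=
        hC h ⟨hh0, hh1.le⟩ φ _ _ c hφ.contDiff (hφ.rotatedProfile_isFlatProfile
          (Icc_pi_div_three_subset hθ3)).contDiff hc.1 hφM hrot i hi x hx
    _ ≤ C * (2 * (M * h ^ (N + 1)) + 2 * h ^ (N + 2) / (h * B)) / h ^ N := by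
        have hpow : h ^ (N + 2) ≤ h ^ (N + 1) := pow_le_pow_of_le_one hh0.le hh1.le (Nat.le_succ _)
        have hcB : c ≤ 2 * h ^ (N + 2) / (h * B) := hc.2.trans (by gcongr; exact hθ.2)
        gcongr
    _ = C * (2 * M + 2 / B) * h := by
        field_simp
        ring
    _ ≤ 1 := hhC.le

end Splicing

section Geometry

open InnerProductGeometry

variable {P φ : ℝ → ℝ} {h l r θ : ℝ}

@[simp] lemma pt2_apply_zero (x y : ℝ) : pt2 x y 0 = x := rfl

@[simp] lemma pt2_apply_one (x y : ℝ) : pt2 x y 1 = y := rfl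

lemma pt2_sub_pt2 (x₁ y₁ x₂ y₂ : ℝ) : pt2 x₁ y₁ - pt2 x₂ y₂ = pt2 (x₁ - x₂) (y₁ - y₂) := by
  ext i
  fin_cases i <;> rfl

lemma smul_pt2 (k x y : ℝ) : k • pt2 x y = pt2 (k * x) (k * y) := by
  ext i
  fin_cases i <;> rfl

lemma norm_pt2 (x y : ℝ) : ‖pt2 x y‖ = √(x ^ 2 + y ^ 2) := by
  simp [EuclideanSpace.norm_eq, Fin.sum_univ_two]

lemma norm_pt2_cos_sin (θ : ℝ) : ‖pt2 (Real.cos θ) (Real.sin θ)‖ = 1 := by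
  rw [norm_pt2, Real.cos_sq_add_sin_sq, Real.sqrt_one]

lemma angle_pt2_cos_sin (hθ : θ ∈ Icc 0 π) :
    angle (pt2 1 0) (pt2 (Real.cos θ) (Real.sin θ)) = θ := by
  have hinner : inner ℝ (pt2 1 0) (pt2 (Real.cos θ) (Real.sin θ)) = Real.cos θ := by
    simp [PiLp.inner_apply, Fin.sum_univ_two]
  have hnorm : ‖pt2 1 0‖ = 1 := by simp [norm_pt2]
  rw [angle, hinner, hnorm, norm_pt2_cos_sin, mul_one, div_one, Real.arccos_cos hθ.1 hθ.2]

/-- `F` is a convex function on `[a, b]` whose graph is a convex smoothing of an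
`(l, r, α)`-hinge with positive curvature except at its endpoints. -/
structure IsHingeSmoothing (F : ℝ → ℝ) (a b l r α : ℝ) : Prop where
  lt : a < b
  left_pos : 0 < l
  right_pos : 0 < r
  angle_mem : α ∈ Ioo 0 π
  contDiffOn : ContDiffOn ℝ ∞ F (Icc a b)
  convexOn : ConvexOn ℝ (Icc a b) F
  exists_apex : ∃ p, dist (pt2 a (F a)) p = l ∧ dist (pt2 b (F b)) p = r ∧
    angle (pt2 a (F a) - p) (pt2 b (F b) - p) = α
  flat : ∀ s, 2 ≤ s →
    iteratedDerivWithin s F (Icc a b) a = 0 ∧ iteratedDerivWithin s F (Icc a b) b = 0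
  curvature_pos : ∀ x ∈ Ioo a b, 0 < iteratedDerivWithin 2 F (Icc a b) x

lemma exists_hinge_apex (hl : 0 < l) (hr : 0 < r) (hθ : θ ∈ Icc 0 π) :
    ∃ p, dist (pt2 0 0) p = l ∧ dist (pt2 (l + r * Real.cos θ) (r * Real.sin θ)) p = r ∧
      angle (pt2 0 0 - p) (pt2 (l + r * Real.cos θ) (r * Real.sin θ) - p) = π - θ := by
  have hleft : pt2 0 0 - pt2 l 0 = -(l • pt2 1 0) := by
    rw [smul_pt2, ← zero_sub, ← zero_smul ℝ (pt2 0 0), smul_pt2, pt2_sub_pt2, pt2_sub_pt2]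
    simp
  have hright : pt2 (l + r * Real.cos θ) (r * Real.sin θ) - pt2 l 0 =
      r • pt2 (Real.cos θ) (Real.sin θ) := by
    rw [smul_pt2, pt2_sub_pt2, add_sub_cancel_left, sub_zero]
  refine ⟨pt2 l 0, ?_, ?_, ?_⟩
  · rw [dist_eq_norm, hleft, norm_neg, norm_smul, norm_pt2, Real.norm_of_nonneg hl.le]
    simp
  · rw [dist_eq_norm, hright, norm_smul, norm_pt2_cos_sin, Real.norm_of_nonneg hr.le, mul_one]
  · rw [hleft, hright, angle_neg_left, angle_smul_left_of_pos _ _ hl,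
      angle_smul_right_of_pos _ _ hr, angle_pt2_cos_sin hθ]

lemma exists_hinge_lengths {y : ℝ} (hθ : θ ∈ Ioc 0 (π / 3)) (hy : y ∈ Ioo 0 (h * Real.tan θ)) :
    ∃ l r, 0 < l ∧ 0 < r ∧ l + r ≤ 3 * h ∧ l + r * Real.cos θ = h ∧ r * Real.sin θ = y := by
  have hcos : 1 / 2 ≤ Real.cos θ := one_half_le_cos ⟨hθ.1.le, hθ.2⟩
  have hsin : 0 < Real.sin θ := Real.sin_pos_of_pos_of_lt_pi hθ.1 (by linarith [hθ.2, Real.pi_pos])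
  have hr : 0 < y / Real.sin θ := div_pos hy.1 hsin
  have hrcos : y / Real.sin θ * Real.cos θ < h := by
    have hlt := hy.2
    rw [Real.tan_eq_sin_div_cos, ← mul_div_assoc, lt_div_iff₀ (by linarith)] at hlt
    rwa [div_mul_eq_mul_div, div_lt_iff₀ hsin]
  exact ⟨h - y / Real.sin θ * Real.cos θ, y / Real.sin θ, sub_pos.2 hrcos, hr, by nlinarith,
    sub_add_cancel _ _, div_mul_cancel₀ _ hsin.ne'⟩

lemma iteratedDerivWithin_primitive_primitive (hP : ContDiff ℝ ∞ P) (hh : 0 < h) (s : ℕ) {x : ℝ}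
    (hx : x ∈ Icc 0 h) :
    iteratedDerivWithin (s + 2) (primitive (primitive P)) (Icc 0 h) x = iteratedDeriv s P x := by
  rw [iteratedDerivWithin_eq_iteratedDeriv (uniqueDiffOn_Icc hh)
    (contDiff_infty.1 (contDiff_primitive (contDiff_primitive hP)) (s + 2)).contDiffAt hx,
    iteratedDeriv_succ', deriv_primitive (contDiff_primitive hP).continuous, iteratedDeriv_succ',
    deriv_primitive hP.continuous]

lemma abs_primitive_le_one {g : ℝ → ℝ} (hh : h ≤ 1) (hg : ∀ y ∈ Icc 0 h, |g y| ≤ 1) {x : ℝ}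
    (hx : x ∈ Icc 0 h) : |primitive g x| ≤ 1 := by
  have hle : ‖primitive g x‖ ≤ 1 * |x - 0| :=
    intervalIntegral.norm_integral_le_of_norm_le_const fun y hy => by
      rw [uIoc_of_le hx.1] at hy
      exact hg y ⟨hy.1.le, hy.2.trans hx.2⟩
  rw [sub_zero, one_mul, abs_of_nonneg hx.1] at hle
  exact hle.trans (hx.2.trans hh)

lemma CrNorm_primitive_primitive_le (hP : ContDiff ℝ ∞ P) (hh : h ∈ Ioc 0 1) {s : ℕ}
    (hbound : ∀ i ≤ s, ∀ x ∈ Icc 0 h, |iteratedDeriv i P x| ≤ 1) :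
    CrNorm s (primitive (primitive P)) (Icc 0 h) ≤ s + 1 := by
  have hP0 : ∀ x ∈ Icc 0 h, |P x| ≤ 1 := fun x hx => by
    simpa only [iteratedDeriv_zero] using hbound 0 s.zero_le x hx
  have hP1 : ∀ x ∈ Icc 0 h, |primitive P x| ≤ 1 := fun x hx => abs_primitive_le_one hh.2 hP0 hx
  have hderiv : ∀ i ≤ s, ∀ x ∈ Icc 0 h,
      |iteratedDerivWithin i (primitive (primitive P)) (Icc 0 h) x| ≤ 1 := by
    rintro (_ | _ | i) hi x hx
    · rw [iteratedDerivWithin_zero]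
      exact abs_primitive_le_one hh.2 hP1 hx
    · rw [zero_add, iteratedDerivWithin_one, (hasDerivAt_primitive
        (contDiff_primitive hP).continuous x).hasDerivWithinAt.derivWithin
        (uniqueDiffOn_Icc hh.1 x hx)]
      exact hP1 x hx
    · rw [iteratedDerivWithin_primitive_primitive hP hh.1 i hx]
      exact hbound i (by omega) x hx
  calc CrNorm s (primitive (primitive P)) (Icc 0 h) ≤ ∑ _i ∈ Finset.range (s + 1), (1 : ℝ) :=
        Finset.sum_le_sum fun i hi => Real.iSup_le
          (fun x => hderiv i (Nat.lt_succ_iff.1 (Finset.mem_range.1 hi)) x x.2) zero_le_one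
    _ = s + 1 := by simp

namespace IsArcProfile

lemma strictMonoOn_primitive (hP : IsArcProfile h P) : StrictMonoOn (primitive P) (Icc 0 h) := by
  refine strictMonoOn_of_deriv_pos (convex_Icc 0 h)
    (contDiff_primitive hP.contDiff).continuous.continuousOn fun x hx => ?_
  rw [interior_Icc] at hx
  rw [deriv_primitive hP.contDiff.continuous]
  exact hP.pos x hx

lemma convexOn_primitive_primitive (hP : IsArcProfile h P) :
    ConvexOn ℝ (Icc 0 h) (primitive (primitive P)) := by
  have hsmooth := contDiff_primitive hP.contDiff
  refine MonotoneOn.convexOn_of_deriv (convex_Icc 0 h)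
    (contDiff_primitive hsmooth).continuous.continuousOn
    ((contDiff_primitive hsmooth).differentiable (by simp)).differentiableOn ?_
  rw [deriv_primitive hsmooth.continuous]
  exact hP.strictMonoOn_primitive.monotoneOn.mono interior_subset

lemma primitive_primitive_mem_Ioo (hP : IsArcProfile h P) :
    primitive (primitive P) h ∈ Ioo 0 (h * primitive P h) := by
  have hh := hP.pos_length
  have hsmooth := contDiff_primitive hP.contDiff
  obtain ⟨x, hx, hslope⟩ := exists_hasDerivAt_eq_slope (primitive (primitive P)) (primitive P) hh
    (contDiff_primitive hsmooth).continuous.continuousOn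
    fun x _ => hasDerivAt_primitive hsmooth.continuous x
  have hvalue : primitive (primitive P) h = h * primitive P x := by
    rw [hslope, primitive_zero, sub_zero, sub_zero, mul_div_cancel₀ _ hh.ne']
  have hmono := hP.strictMonoOn_primitive
  have hx0 := hmono (left_mem_Icc.2 hh.le) (Ioo_subset_Icc_self hx) hx.1
  rw [primitive_zero] at hx0
  rw [hvalue]
  exact ⟨mul_pos hh hx0, mul_lt_mul_of_pos_left
    (hmono (Ioo_subset_Icc_self hx) (right_mem_Icc.2 hh.le) hx.2) hh⟩

lemma iteratedDeriv_apply_zero (hP : IsArcProfile h P) (s : ℕ) : iteratedDeriv s P 0 = 0 :=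
  iteratedDeriv_eq_zero_of_eqOn_Iio hP.contDiff
    (hP.eqOn_zero_left.mono Iio_subset_Iic_self) s le_rfl

lemma iteratedDeriv_apply_length (hP : IsArcProfile h P) (s : ℕ) : iteratedDeriv s P h = 0 :=
  iteratedDeriv_eq_zero_of_eqOn_Ioi hP.contDiff
    (hP.eqOn_zero_right.mono Ioi_subset_Ici_self) s le_rfl

-- The hinge is cut out by the tangent lines at the two ends.
lemma exists_isHingeSmoothing (hP : IsArcProfile h P) (hθ : θ ∈ Ioc 0 (π / 3))
    (hturn : primitive P h = Real.tan θ) :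
    ∃ l r, l + r ≤ 3 * h ∧
      IsHingeSmoothing (primitive (primitive P)) 0 h l r (π - θ) := by
  have hh := hP.pos_length
  have hθπ : θ < π := by linarith [hθ.2, Real.pi_pos]
  obtain ⟨l, r, hl, hr, hlr, hcos, hsin⟩ :=
    exists_hinge_lengths hθ (hturn ▸ hP.primitive_primitive_mem_Ioo)
  obtain ⟨p, hpl, hpr, hangle⟩ := exists_hinge_apex hl hr ⟨hθ.1.le, hθπ.le⟩
  rw [hcos, hsin] at hpr hangle
  refine ⟨l, r, hlr, hh, hl, hr, ⟨sub_pos.2 hθπ, sub_lt_self _ hθ.1⟩,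
    (contDiff_primitive (contDiff_primitive hP.contDiff)).contDiffOn,
    hP.convexOn_primitive_primitive, ⟨p, ?_, hpr, ?_⟩, fun s hs => ?_, fun x hx => ?_⟩
  · rwa [primitive_zero]
  · rwa [primitive_zero]
  · obtain ⟨s, rfl⟩ := Nat.exists_eq_add_of_le' hs
    rw [iteratedDerivWithin_primitive_primitive hP.contDiff hh s (left_mem_Icc.2 hh.le),
      iteratedDerivWithin_primitive_primitive hP.contDiff hh s (right_mem_Icc.2 hh.le)]
    exact ⟨hP.iteratedDeriv_apply_zero s, hP.iteratedDeriv_apply_length s⟩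
  · rw [iteratedDerivWithin_primitive_primitive hP.contDiff hh 0 (Ioo_subset_Icc_self hx),
      iteratedDeriv_zero]
    exact hP.pos x hx

end IsArcProfile

/-- The graph of `F` over `[a, b]` is modelled near its endpoints on the function `f` on
`[0, τ]`. -/
def IsModelledNearEndpoints (f : ℝ → ℝ) (τ : ℝ) (F : ℝ → ℝ) (a b : ℝ) : Prop :=
  ∃ (ι₁ ι₂ : EuclideanSpace ℝ (Fin 2) ≃ᵢ EuclideanSpace ℝ (Fin 2)) (δ₁ δ₂ : ℝ),
    0 < δ₁ ∧ 0 < δ₂ ∧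
    ι₁ '' ((fun x => pt2 x (F x)) '' Icc a (a + δ₁)) ⊆ (fun x => pt2 x (f x)) '' Icc 0 τ ∧
    ι₂ '' ((fun x => pt2 x (F x)) '' Icc (b - δ₂) b) ⊆ (fun x => pt2 x (f x)) '' Icc 0 τ

/-- The orientation-reversing isometry of the plane that takes `b` to the origin and the direction
`(-cos θ, -sin θ)` to `(1, 0)`. -/
def endReflection (θ : ℝ) (b : EuclideanSpace ℝ (Fin 2)) :
    EuclideanSpace ℝ (Fin 2) ≃ᵢ EuclideanSpace ℝ (Fin 2) where
  toFun p := pt2 (Real.cos θ * (b 0 - p 0) - Real.sin θ * (p 1 - b 1))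
    (Real.sin θ * (b 0 - p 0) + Real.cos θ * (p 1 - b 1))
  invFun q := pt2 (b 0 - Real.cos θ * q 0 - Real.sin θ * q 1)
    (b 1 - Real.sin θ * q 0 + Real.cos θ * q 1)
  left_inv p := by
    ext i
    fin_cases i
    · simp only [Fin.zero_eta, pt2_apply_zero, pt2_apply_one]
      linear_combination (p 0 - b 0) * Real.cos_sq_add_sin_sq θ
    · simp only [Fin.mk_one, pt2_apply_zero, pt2_apply_one]
      linear_combination (p 1 - b 1) * Real.cos_sq_add_sin_sq θ
  right_inv q := by
    ext i
    fin_cases i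
    · simp only [Fin.zero_eta, pt2_apply_zero, pt2_apply_one]
      linear_combination q 0 * Real.cos_sq_add_sin_sq θ
    · simp only [Fin.mk_one, pt2_apply_zero, pt2_apply_one]
      linear_combination q 1 * Real.cos_sq_add_sin_sq θ
  isometry_toFun := Isometry.of_dist_eq fun p q => by
    rw [dist_eq_norm, pt2_sub_pt2, norm_pt2, EuclideanSpace.dist_eq, Fin.sum_univ_two,
      Real.dist_eq, Real.dist_eq, sq_abs, sq_abs]
    congr 1
    linear_combination ((p 0 - q 0) ^ 2 + (p 1 - q 1) ^ 2) * Real.cos_sq_add_sin_sq θ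

lemma endReflection_pt2 (hφ : IsFlatProfile φ) (hθ : θ ∈ Ico 0 (π / 2)) (x y s : ℝ) :
    endReflection θ (pt2 x y) (pt2 (x - s) (y + rotatedGraph φ θ s)) =
      pt2 (rotatedParam φ θ s) (primitive (primitive φ) (rotatedParam φ θ s)) := by
  have hs := hφ.rotatedAbscissa_rotatedParam hθ s
  rw [rotatedAbscissa] at hs
  change pt2 (Real.cos θ * (x - (x - s)) - Real.sin θ * (y + rotatedGraph φ θ s - y))
    (Real.sin θ * (x - (x - s)) + Real.cos θ * (y + rotatedGraph φ θ s - y)) = _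
  rw [rotatedGraph]
  congr 1
  · linear_combination rotatedParam φ θ s * Real.cos_sq_add_sin_sq θ - Real.cos θ * hs
  · linear_combination primitive (primitive φ) (rotatedParam φ θ s) * Real.cos_sq_add_sin_sq θ -
      Real.sin θ * hs

namespace IsModelArcProfile

lemma primitive_primitive_sub (hφ : IsFlatProfile φ) (hP : IsModelArcProfile φ θ h P)
    (hθ : θ ∈ Ico 0 (π / 2)) :
    EqOn (fun s => primitive (primitive P) (h - s))
      (fun s => primitive (primitive P) h + rotatedGraph φ θ s) (Icc 0 (h / 4)) := by
  have hsmooth := contDiff_primitive hP.contDiff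
  have hF : ∀ s, HasDerivAt (fun s => primitive (primitive P) (h - s)) (-primitive P (h - s)) s :=
    fun s => by simpa using (hasDerivAt_primitive hsmooth.continuous (h - s)).comp_const_sub h s
  have hslope : ∀ s, HasDerivAt (fun s => -primitive P (h - s)) (P (h - s)) s := fun s => by
    simpa using ((hasDerivAt_primitive hP.contDiff.continuous (h - s)).comp_const_sub h s).fun_neg
  have hG : ∀ s, HasDerivAt (fun s => primitive (primitive P) h + rotatedGraph φ θ s)
      (deriv (rotatedGraph φ θ) s) s := fun s =>
    (hφ.hasDerivAt_rotatedGraph hθ s).differentiableAt.hasDerivAt.const_add _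
  refine eqOn_Icc_of_hasDerivWithinAt_two (fun s _ => (hF s).hasDerivWithinAt)
    (fun s _ => (hG s).hasDerivWithinAt)
    (fun s hs => hP.eqOn_right hs ▸ (hslope s).hasDerivWithinAt)
    (fun s _ => (hφ.hasDerivAt_deriv_rotatedGraph hθ s).hasDerivWithinAt) ?_ ?_
  · rw [sub_zero, hφ.rotatedGraph_zero hθ, add_zero]
  · rw [sub_zero, hP.primitive_length, hφ.deriv_rotatedGraph_zero hθ]

lemma isModelledNearEndpoints {f : ℝ → ℝ} {ρ τ : ℝ} (hφ : IsFlatProfile φ)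
    (hP : IsModelArcProfile φ θ h P) (hθ : θ ∈ Icc 0 (π / 3))
    (hf : EqOn f (primitive (primitive φ)) (Icc 0 ρ)) (hhρ : h / 2 ≤ ρ) (hρτ : ρ ≤ τ) :
    IsModelledNearEndpoints f τ (primitive (primitive P)) 0 h := by
  have hh := hP.pos_length
  have hθ' := Icc_pi_div_three_subset hθ
  refine ⟨.refl _, endReflection θ (pt2 h (primitive (primitive P) h)), h / 4, h / 4,
    by linarith, by linarith, ?_, ?_⟩
  · rintro _ ⟨_, ⟨x, hx, rfl⟩, rfl⟩
    rw [zero_add] at hx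
    have hleft : EqOn (primitive (primitive P)) (primitive (primitive φ)) (Icc 0 (h / 4)) :=
      have hmem : (0 : ℝ) ∈ Icc 0 (h / 4) := left_mem_Icc.2 (by linarith)
      eqOn_primitive hmem (eqOn_primitive hmem hP.eqOn_left)
    refine ⟨x, ⟨hx.1, by linarith [hx.2]⟩, ?_⟩
    change pt2 x (f x) = pt2 x (primitive (primitive P) x)
    rw [hf ⟨hx.1, by linarith [hx.2]⟩, hleft hx]
  · rintro _ ⟨_, ⟨x, hx, rfl⟩, rfl⟩
    obtain ⟨s, rfl⟩ : ∃ s, x = h - s := ⟨h - x, by ring⟩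
    have hs : s ∈ Icc 0 (h / 4) := ⟨by linarith [hx.2], by linarith [hx.1]⟩
    have hparam0 : 0 ≤ rotatedParam φ θ s :=
      (hφ.rotatedParam_zero hθ').ge.trans ((hφ.strictMono_rotatedParam hθ').monotone hs.1)
    have hparam : rotatedParam φ θ s ≤ h / 2 :=
      (hφ.rotatedParam_le_two_mul hθ hs.1).trans (by linarith [hs.2])
    refine ⟨rotatedParam φ θ s, ⟨hparam0, by linarith⟩, ?_⟩
    simp only [hf ⟨hparam0, hparam.trans hhρ⟩, hP.primitive_primitive_sub hφ hθ' hs,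
      endReflection_pt2 hφ hθ']

end IsModelArcProfile

end Geometry

section Assembly

variable {f φ : ℝ → ℝ} {τ R : ℝ}

lemma exists_isFlatProfile_eqOn (hτ : 0 < τ) (hf : ContDiffOn ℝ ∞ f (Icc 0 τ))
    (hflat : ∀ i, iteratedDerivWithin i f (Icc 0 τ) 0 = 0)
    (hf'' : ∀ x ∈ Ioc 0 τ, 0 < iteratedDerivWithin 2 f (Icc 0 τ) x) :
    ∃ φ, IsFlatProfile φ ∧ (∀ y ∈ Ioc 0 (τ / 2), 0 < φ y) ∧
      EqOn f (primitive (primitive φ)) (Icc 0 (τ / 2)) := by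
  have hI : UniqueDiffOn ℝ (Icc 0 τ) := uniqueDiffOn_Icc hτ
  set f' := derivWithin f (Icc 0 τ)
  have hf' : ContDiffOn ℝ ∞ f' (Icc 0 τ) := hf.derivWithin hI (by simp)
  set u := derivWithin f' (Icc 0 τ)
  have hu : ContDiffOn ℝ ∞ u (Icc 0 τ) := hf'.derivWithin hI (by simp)
  have hiter : ∀ i, iteratedDerivWithin (i + 2) f (Icc 0 τ) = iteratedDerivWithin i u (Icc 0 τ) :=
    fun i => by rw [iteratedDerivWithin_succ', iteratedDerivWithin_succ']
  have hu_iter : iteratedDerivWithin 2 f (Icc 0 τ) = u := by rw [hiter 0, iteratedDerivWithin_zero]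
  have hu0 : u 0 = 0 := hu_iter ▸ hflat 2
  rw [hu_iter] at hf''
  obtain ⟨φ, hφ, hφ0, hφzero, hφu⟩ := exists_contDiff_extension_of_flat hτ hu
    (fun i => hiter i ▸ hflat (i + 2)) fun x hx => by
      rcases hx.1.eq_or_lt with rfl | hx0
      exacts [hu0.ge, (hf'' x ⟨hx0, hx.2⟩).le]
  rw [zero_add] at hφu
  have hsub : Icc 0 (τ / 2) ⊆ Icc 0 τ := Icc_subset_Icc_right (by linarith)
  refine ⟨φ, ⟨hφ, hφ0, hφzero⟩, fun y hy => ?_, ?_⟩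
  · rw [hφu (Ioc_subset_Icc_self hy)]
    exact hf'' y ⟨hy.1, by linarith [hy.2]⟩
  · refine eqOn_Icc_of_hasDerivWithinAt_two (u' := f') (w := u)
      (fun x hx => ((hf.differentiableOn (by simp)) x (hsub hx)).hasDerivWithinAt.mono hsub)
      (fun x _ => (hasDerivAt_primitive (contDiff_primitive hφ).continuous x).hasDerivWithinAt)
      (fun x hx => ((hf'.differentiableOn (by simp)) x (hsub hx)).hasDerivWithinAt.mono hsub)
      (fun x hx => hφu hx ▸ (hasDerivAt_primitive hφ.continuous x).hasDerivWithinAt) ?_ ?_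
    · rw [primitive_zero]
      simpa only [iteratedDerivWithin_zero] using hflat 0
    · rw [primitive_zero]
      simpa only [iteratedDerivWithin_one] using hflat 1

lemma eventually_exists_isHingeSmoothing (hφ : IsFlatProfile φ) (hR : 0 < R) (hRτ : R ≤ τ)
    (hpos : ∀ y ∈ Ioc 0 R, 0 < φ y) (hf : EqOn f (primitive (primitive φ)) (Icc 0 R)) (N : ℕ) :
    ∀ᶠ h in 𝓝[>] 0, ∀ θ ∈ Icc (h ^ (N + 2) / 2) (h ^ (N + 2)), ∃ l r F,
      IsHingeSmoothing F 0 h l r (π - θ) ∧ IsModelledNearEndpoints f τ F 0 h ∧ l + r ≤ 3 * h ∧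
        ∀ s ≤ N, CrNorm s F (Icc 0 h) ≤ s + 1 := by
  filter_upwards [eventually_exists_isModelArcProfile hφ hR hpos N,
    Ioo_mem_nhdsGT (lt_min hR one_pos)] with h hprofile hh θ hθ
  obtain ⟨P, hP, hbound⟩ := hprofile θ hθ
  have hhR : h < R := hh.2.trans_le (min_le_left _ _)
  have hh1 : h < 1 := hh.2.trans_le (min_le_right _ _)
  have hh0 := hh.1
  have hθ' : θ ∈ Ioc 0 (π / 3) := by
    refine ⟨lt_of_lt_of_le (by positivity) hθ.1, hθ.2.trans ?_⟩
    linarith [pow_le_one₀ (n := N + 2) hh0.le hh1.le, Real.pi_gt_three]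
  obtain ⟨l, r, hlr, hsmoothing⟩ := hP.exists_isHingeSmoothing hθ' hP.primitive_length
  exact ⟨l, r, _, hsmoothing,
    hP.isModelledNearEndpoints hφ (Ioc_subset_Icc_self hθ') hf (by linarith) hRτ, hlr,
    fun s hs => CrNorm_primitive_primitive_le hP.contDiff ⟨hh0, hh1.le⟩ fun i hi =>
      hbound i (hi.trans hs)⟩

lemma exists_div_natCast_mem_Icc {S x : ℝ} (hS : 0 < S) (hSx : 2 * S ≤ x) :
    ∃ n : ℕ, 2 ≤ n ∧ x / n ∈ Icc (S / 2) S := by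
  have hx : 0 < x := by linarith
  have hle : x / S ≤ ⌈x / S⌉₊ := Nat.le_ceil _
  have hlt : (⌈x / S⌉₊ : ℝ) < x / S + 1 := Nat.ceil_lt_add_one (by positivity)
  have htwo : 2 ≤ x / S := (le_div_iff₀ hS).2 hSx
  have hn : (2 : ℝ) ≤ ⌈x / S⌉₊ := htwo.trans hle
  have hmul : x / S * S = x := div_mul_cancel₀ _ hS.ne'
  refine ⟨⌈x / S⌉₊, mod_cast hn, ?_, ?_⟩
  · rw [le_div_iff₀ (by linarith)]
    nlinarith
  · rw [div_le_iff₀ (by linarith)]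
    nlinarith

lemma two_pow_mul_quarter_pow (m : ℕ) :
    (2 : ℝ) ^ (m + 1) * (1 / 4) ^ (m + 1) = 1 / 2 / 2 ^ m := by
  have hhalf : (2 : ℝ) * (1 / 4) = 1 / 2 := by norm_num
  rw [← mul_pow, hhalf, div_div, ← pow_succ', one_div_pow]

lemma exists_angles_hasSum {κ : ℕ → ℝ} (hκ0 : ∀ m, 0 < κ m)
    (hκ : ∀ m, κ m ≤ (1 / 4) ^ (m + 1)) :
    ∃ n : ℕ, 2 ≤ n ∧ ∃ θ : ℕ → ℝ, (∀ m, θ m ∈ Icc (κ m / 2) (κ m)) ∧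
      HasSum (fun m => 2 ^ (m + 1) * θ m) (π / n) := by
  have hterm : ∀ m, 2 ^ (m + 1) * κ m ≤ 1 / 2 / 2 ^ m := fun m => by
    calc 2 ^ (m + 1) * κ m ≤ 2 ^ (m + 1) * (1 / 4) ^ (m + 1) := by gcongr; exact hκ m
      _ = 1 / 2 / 2 ^ m := two_pow_mul_quarter_pow m
  have hgeom : HasSum (fun m : ℕ => (1 : ℝ) / 2 / 2 ^ m) 1 := hasSum_geometric_two' 1
  have hpos : ∀ m, 0 < 2 ^ (m + 1) * κ m := fun m => mul_pos (by positivity) (hκ0 m)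
  have hsum : Summable fun m => 2 ^ (m + 1) * κ m :=
    hgeom.summable.of_nonneg_of_le (fun m => (hpos m).le) hterm
  set S := ∑' m, 2 ^ (m + 1) * κ m
  have hS : 0 < S := hsum.tsum_pos (fun m => (hpos m).le) 0 (hpos 0)
  have hS1 : S ≤ 1 := hasSum_le hterm hsum.hasSum hgeom
  obtain ⟨n, hn, hmem⟩ := exists_div_natCast_mem_Icc hS (by linarith [Real.pi_gt_three] : _ ≤ π)
  have hratio : π / n / S ∈ Icc (1 / 2) 1 :=
    ⟨(le_div_iff₀ hS).2 (by linarith [hmem.1]), (div_le_one hS).2 hmem.2⟩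
  refine ⟨n, hn, fun m => κ m * (π / n / S), fun m => ⟨?_, ?_⟩, ?_⟩
  · nlinarith [hκ0 m, hratio.1]
  · exact mul_le_of_le_one_right (hκ0 m).le hratio.2
  · have hsumS : HasSum (fun m => 2 ^ (m + 1) * κ m) S := hsum.hasSum
    simpa only [mul_assoc, mul_div_cancel₀ _ hS.ne'] using hsumS.mul_right (π / n / S)

lemma exists_forall_CrNorm_le {F : ℕ → ℝ → ℝ} {J : ℕ → Set ℝ}
    (hF : ∀ m, ∀ s ≤ m, CrNorm s (F m) (J m) ≤ s + 1) (s : ℕ) :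
    ∃ M : ℝ, ∀ m, CrNorm s (F m) (J m) ≤ M := by
  have hbdd : IsBoundedUnder (· ≤ ·) atTop fun m => CrNorm s (F m) (J m) :=
    isBoundedUnder_of_eventually_le <| (eventually_ge_atTop s).mono fun m hm => hF m s hm
  obtain ⟨M, hM⟩ := hbdd.bddAbove_range
  exact ⟨M, fun m => hM (mem_range_self m)⟩

lemma summable_two_pow_mul {x h : ℕ → ℝ} (hx0 : ∀ m, 0 ≤ x m) (hx : ∀ m, x m ≤ 3 * h m)
    (hh : ∀ m, h m ≤ (1 / 4) ^ (m + 1)) : Summable fun m => 2 ^ (m + 1) * x m := by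
  refine ((hasSum_geometric_two' 1).summable.mul_left 3).of_nonneg_of_le
    (fun m => mul_nonneg (by positivity) (hx0 m)) fun m => ?_
  calc 2 ^ (m + 1) * x m ≤ 2 ^ (m + 1) * (3 * (1 / 4) ^ (m + 1)) := by
        gcongr
        linarith [hx m, hh m]
    _ = 3 * (1 / 2 / 2 ^ m) := by rw [mul_left_comm, two_pow_mul_quarter_pow]

theorem stmt15_general (hτ : 0 < τ) (hf : ContDiffOn ℝ ∞ f (Icc 0 τ))
    (hflat : ∀ i, iteratedDerivWithin i f (Icc 0 τ) 0 = 0)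
    (hf'' : ∀ x ∈ Ioc 0 τ, 0 < iteratedDerivWithin 2 f (Icc 0 τ) x) :
    ∃ n : ℕ, 2 ≤ n ∧ ∃ (l r α a b : ℕ → ℝ) (F : ℕ → ℝ → ℝ),
      (∀ m, IsHingeSmoothing (F m) (a m) (b m) (l m) (r m) (α m)) ∧
      (∀ m, IsModelledNearEndpoints f τ (F m) (a m) (b m)) ∧
      (∀ s, ∃ M, ∀ m, CrNorm s (F m) (Icc (a m) (b m)) ≤ M) ∧
      Summable (fun m => 2 ^ (m + 1) * (l m + r m)) ∧
      HasSum (fun m => 2 ^ (m + 1) * (π - α m)) (π / n) := by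
  obtain ⟨φ, hφ, hpos, hfφ⟩ := exists_isFlatProfile_eqOn hτ hf hflat hf''
  choose h hh hsmoothing using fun m : ℕ =>
    ((eventually_mem_set.2 (Ioo_mem_nhdsGT (by positivity : (0 : ℝ) < (1 / 4) ^ (m + 1)))).and
      (eventually_exists_isHingeSmoothing hφ (half_pos hτ) (half_le_self hτ.le) hpos hfφ m)).exists
  have hh1 : ∀ m, h m ≤ 1 := fun m => (hh m).2.le.trans (pow_le_one₀ (by norm_num) (by norm_num))
  obtain ⟨n, hn, θ, hθ, hsum⟩ := exists_angles_hasSum (κ := fun m => h m ^ (m + 2))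
    (fun m => pow_pos (hh m).1 _)
    fun m => (pow_le_of_le_one (hh m).1.le (hh1 m) (by omega)).trans (hh m).2.le
  choose l r F hF hmodelled hlr hnorm using fun m => hsmoothing m (θ m) (hθ m)
  refine ⟨n, hn, l, r, fun m => π - θ m, 0, h, F, hF, hmodelled, exists_forall_CrNorm_le hnorm,
    summable_two_pow_mul (fun m => (add_pos (hF m).left_pos (hF m).right_pos).le) hlr
      fun m => (hh m).2.le, ?_⟩
  simpa only [sub_sub_cancel] using hsum

end Assembly

open Real InnerProductGeometry in
/-- Lemma 4.3 of the paper (smoothing a hinge). Given `f ∈ C^∞([0,τ])`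
pliable at `0` with `f' > 0` and `f'' > 0` on `(0,τ]`, there are `n ≥ 2` and sequences
`(l_m, r_m, α_m)_{m ≥ 1}` (indexed here by `m : ℕ` standing for `m + 1`), together with
convex `C^∞` functions `F_m` on intervals `[aJ_m, bJ_m]` whose graphs are convex
smoothings of `(l_m, r_m, α_m)`-hinges (joining the endpoints of the hinge and
infinitely flat at the endpoints), modelled on `f` near the endpoints, with positive
curvature except at the endpoints, with all `C^r` norms bounded uniformly in `m`, and
with `Σ 2^m (l_m + r_m) < ∞` and `Σ 2^m (π - α_m) = π / n`. -/
theorem stmt15 (τ : ℝ) (hτ : 0 < τ)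
    (f : ℝ → ℝ) (hfsm : ContDiffOn ℝ (⊤ : ℕ∞) f (Set.Icc 0 τ))
    (hfpl : Pliable 0 τ 0 f)
    (hf' : ∀ x ∈ Set.Ioc 0 τ, 0 < derivWithin f (Set.Icc 0 τ) x)
    (hf'' : ∀ x ∈ Set.Ioc 0 τ, 0 < iteratedDerivWithin 2 f (Set.Icc 0 τ) x) :
    ∃ n : ℕ, 2 ≤ n ∧
    ∃ (l r α aJ bJ : ℕ → ℝ) (F : ℕ → ℝ → ℝ),
      (∀ m : ℕ, 0 < l m ∧ 0 < r m ∧ α m ∈ Set.Ioo 0 π ∧ aJ m < bJ m) ∧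
      -- each smoothing is the graph of a convex C^∞ function
      (∀ m : ℕ, ContDiffOn ℝ (⊤ : ℕ∞) (F m) (Set.Icc (aJ m) (bJ m)) ∧
        ConvexOn ℝ (Set.Icc (aJ m) (bJ m)) (F m)) ∧
      -- the endpoints of the graph of F m are those of an (l m, r m, α m)-hinge
      (∀ m : ℕ, ∃ p : EuclideanSpace ℝ (Fin 2),
        dist (pt2 (aJ m) (F m (aJ m))) p = l m ∧
        dist (pt2 (bJ m) (F m (bJ m))) p = r m ∧
        angle (pt2 (aJ m) (F m (aJ m)) - p) (pt2 (bJ m) (F m (bJ m)) - p) = α m) ∧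
      -- infinitely flat at the endpoints (a convex smoothing)
      (∀ m : ℕ, ∀ s : ℕ, 2 ≤ s →
        iteratedDerivWithin s (F m) (Set.Icc (aJ m) (bJ m)) (aJ m) = 0 ∧
        iteratedDerivWithin s (F m) (Set.Icc (aJ m) (bJ m)) (bJ m) = 0) ∧
      -- modelled on f near the endpoints, via rigid motions of the plane
      (∀ m : ℕ, ∃ (ι₁ ι₂ : EuclideanSpace ℝ (Fin 2) ≃ᵢ EuclideanSpace ℝ (Fin 2))
          (δ₁ δ₂ : ℝ), 0 < δ₁ ∧ 0 < δ₂ ∧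
        ι₁ '' ((fun x => pt2 x (F m x)) '' Set.Icc (aJ m) (aJ m + δ₁)) ⊆
          (fun x => pt2 x (f x)) '' Set.Icc 0 τ ∧
        ι₂ '' ((fun x => pt2 x (F m x)) '' Set.Icc (bJ m - δ₂) (bJ m)) ⊆
          (fun x => pt2 x (f x)) '' Set.Icc 0 τ) ∧
      -- positive curvature except at the endpoints
      (∀ m : ℕ,
        (∀ x ∈ Set.Ioo (aJ m) (bJ m),
          0 < iteratedDerivWithin 2 (F m) (Set.Icc (aJ m) (bJ m)) x) ∧
        iteratedDerivWithin 2 (F m) (Set.Icc (aJ m) (bJ m)) (aJ m) = 0 ∧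
        iteratedDerivWithin 2 (F m) (Set.Icc (aJ m) (bJ m)) (bJ m) = 0) ∧
      -- uniformly bounded C^r norms
      (∀ s : ℕ, ∃ M : ℝ, ∀ m : ℕ, CrNorm s (F m) (Set.Icc (aJ m) (bJ m)) ≤ M) ∧
      -- the series conditions
      Summable (fun m : ℕ => (2 : ℝ) ^ (m + 1) * (l m + r m)) ∧
      HasSum (fun m : ℕ => (2 : ℝ) ^ (m + 1) * (π - α m)) (π / n) := by
  have hflat := hfpl.iteratedDerivWithin_eq_zero hτ (left_mem_Icc.2 hτ.le) hfsm
  obtain ⟨n, hn, l, r, α, a, b, F, hF, hmodelled, hnorm, hlength, hangle⟩ :=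
    stmt15_general hτ hfsm hflat hf''
  exact ⟨n, hn, l, r, α, a, b, F,
    fun m => ⟨(hF m).left_pos, (hF m).right_pos, (hF m).angle_mem, (hF m).lt⟩,
    fun m => ⟨(hF m).contDiffOn, (hF m).convexOn⟩, fun m => (hF m).exists_apex,
    fun m => (hF m).flat, hmodelled, fun m => ⟨(hF m).curvature_pos, (hF m).flat 2 le_rfl⟩,
    hnorm, hlength, hangle⟩
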